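/- There exists a universal constant C > 0 such that for every dimension n and every isotropic random vector X in ℝⁿ with log-concave density, the thin-shell width satisfies √(Var(|X|)) ≤ C·n^{1/2 − 1/6} = C·n^{1/3}. -/

import Mathlib

open MeasureTheory ProbabilityTheory Real
open scoped ENNReal RealInnerProductSpace Pointwise NNReal

noncomputable section

/-- A nonnegative function is log-concave if `f(λx+(1-λ)y) ≥ f(x)^λ f(y)^{1-λ}`. -/
def IsLogConcaveFn {E : Type*} [AddCommGroup E] [Module ℝ E] (f : E → ℝ) : Prop :=
  (∀ x, 0 ≤ f x) ∧
  ∀ x y : E, ∀ l : ℝ, 0 ≤ l → l ≤ 1 →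
    f x ^ l * f y ^ (1 - l) ≤ f (l • x + (1 - l) • y)

/-- Hilbert-Schmidt (Frobenius) norm of a matrix. -/
def hsNorm {n : ℕ} (A : Matrix (Fin n) (Fin n) ℝ) : ℝ :=
  Real.sqrt (∑ i, ∑ j, (A i j) ^ 2)

/-- Operator norm of a matrix acting on Euclidean space. -/
def opNorm {n : ℕ} (A : Matrix (Fin n) (Fin n) ℝ) : ℝ :=
  ‖LinearMap.toContinuousLinearMap (Matrix.toEuclideanLin A)‖

/-- Application of a matrix to a Euclidean vector. -/
def mApp {n : ℕ} (A : Matrix (Fin n) (Fin n) ℝ) (x : EuclideanSpace ℝ (Fin n)) :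
    EuclideanSpace ℝ (Fin n) := Matrix.toEuclideanLin A x

/-- The random vector `X` has density `f` with respect to Lebesgue measure. -/
def HasDensityFn {Ω : Type*} [MeasurableSpace Ω] (P : Measure Ω) {n : ℕ}
    (X : Ω → EuclideanSpace ℝ (Fin n)) (f : EuclideanSpace ℝ (Fin n) → ℝ) : Prop :=
  Measurable X ∧ Measure.map X P = volume.withDensity fun x => ENNReal.ofReal (f x)

/-- `X` is isotropic: centered with identity covariance. -/
def Isotropic {Ω : Type*} [MeasurableSpace Ω] (P : Measure Ω) {n : ℕ}
    (X : Ω → EuclideanSpace ℝ (Fin n)) : Prop :=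
  (∫ ω, X ω ∂P) = 0 ∧
  ∀ θ η : EuclideanSpace ℝ (Fin n), (∫ ω, ⟪X ω, θ⟫ * ⟪X ω, η⟫ ∂P) = ⟪θ, η⟫

/-- `X` is ψ_α with constant `b`. -/
def IsPsiAlpha {Ω : Type*} [MeasurableSpace Ω] (P : Measure Ω) {n : ℕ}
    (X : Ω → EuclideanSpace ℝ (Fin n)) (α b : ℝ) : Prop :=
  ∀ p : ℝ, 2 ≤ p → ∀ y : EuclideanSpace ℝ (Fin n),
    (∫ ω, |⟪X ω, y⟫| ^ p ∂P) ^ (1/p) ≤ b * p ^ (1/α) * (∫ ω, ⟪X ω, y⟫ ^ 2 ∂P) ^ ((1:ℝ)/2)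

/-- `G` is a standard Gaussian random vector in `ℝⁿ`. -/
def IsStdGaussian {Ω : Type*} [MeasurableSpace Ω] (P : Measure Ω) {n : ℕ}
    (G : Ω → EuclideanSpace ℝ (Fin n)) : Prop :=
  Measurable G ∧
  Measure.map G P = volume.withDensity fun x =>
    ENNReal.ofReal ((2 * π) ^ (-(n:ℝ)/2) * Real.exp (-‖x‖ ^ 2 / 2))

/-- Surface area of the unit sphere `S^{k-1}` in `ℝᵏ`. -/
def sphereVol (k : ℕ) : ℝ := 2 * π ^ ((k : ℝ)/2) / Real.Gamma ((k : ℝ)/2)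

/-- The marginal density `π_F g(x) = ∫_{F^⊥} g(x+y) dy`. -/
def marginalDensity {n : ℕ} (g : EuclideanSpace ℝ (Fin n) → ℝ)
    (F : Submodule ℝ (EuclideanSpace ℝ (Fin n))) (x : EuclideanSpace ℝ (Fin n)) : ℝ :=
  ∫ y : Fᗮ, g (x + y)

/-- `h_{k,p}(u) = vol(S^{k-1}) ∫₀^∞ t^{p+k-1} π_{u(E₀)} g(t u(θ₀)) dt`. -/
def hkp {n : ℕ} (g : EuclideanSpace ℝ (Fin n) → ℝ)
    (E₀ : Submodule ℝ (EuclideanSpace ℝ (Fin n))) (θ₀ : EuclideanSpace ℝ (Fin n))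
    (k : ℕ) (p : ℝ) (u : Matrix (Fin n) (Fin n) ℝ) : ℝ :=
  sphereVol k * ∫ t in Set.Ioi (0:ℝ), t ^ (p + (k:ℝ) - 1) *
    marginalDensity g (Submodule.map (Matrix.toEuclideanLin u) E₀) (t • mApp u θ₀)

/-- Support functional of the one-sided L_q-centroid body `Z⁺_q(w)`. -/
def suppZplus {m : ℕ} (w : EuclideanSpace ℝ (Fin m) → ℝ) (q : ℝ)
    (y : EuclideanSpace ℝ (Fin m)) : ℝ :=
  (2 * ∫ x, (max ⟪x, y⟫ 0) ^ q * w x) ^ (1/q)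

/-- Ball's body `K_q(w) = {x : q ∫₀^∞ t^{q-1} w(tx) dt ≥ 1}`. -/
def ballBody {m : ℕ} (w : EuclideanSpace ℝ (Fin m) → ℝ) (q : ℝ) :
    Set (EuclideanSpace ℝ (Fin m)) :=
  {x | 1 ≤ q * ∫ t in Set.Ioi (0:ℝ), t ^ (q-1) * w (t • x)}

/-- The one-sided L_q-centroid body `Z⁺_q(w)`, as the convex set with support
functional `suppZplus w q`. -/
def ZplusBody {m : ℕ} (w : EuclideanSpace ℝ (Fin m) → ℝ) (q : ℝ) :
    Set (EuclideanSpace ℝ (Fin m)) :=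
  {x | ∀ y, ⟪x, y⟫ ≤ suppZplus w q y}

/-- One-dimensional Brunn–Minkowski, compact case. -/
lemma bm_compact {K L : Set ℝ} (hK : IsCompact K) (hL : IsCompact L) (hKn : K.Nonempty)
    (hLn : L.Nonempty) : volume K + volume L ≤ volume (K + L) := by
  obtain ⟨a, haK, ha⟩ := hK.exists_isGreatest hKn
  obtain ⟨b, hbL, hb⟩ := hL.exists_isLeast hLn
  have h1 : (fun x => x + b) '' K ⊆ K + L := by
    rintro _ ⟨x, hx, rfl⟩; exact Set.add_mem_add hx hbL
  have h2 : (fun x => a + x) '' L ⊆ K + L := by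
    rintro _ ⟨x, hx, rfl⟩; exact Set.add_mem_add haK hx
  have hi : ((fun x => x + b) '' K) ∩ ((fun x => a + x) '' L) ⊆ {a + b} := by
    rintro z ⟨⟨x, hx, rfl⟩, ⟨y, hy, hxy⟩⟩
    have := ha hx
    have := hb hy
    simp only at hxy
    simp only [Set.mem_singleton_iff]
    linarith
  have hd : AEDisjoint volume ((fun x => x + b) '' K) ((fun x => a + x) '' L) :=
    measure_mono_null hi (by simp)
  have hm : NullMeasurableSet ((fun x => a + x) '' L) volume :=
    (hL.image (by fun_prop)).measurableSet.nullMeasurableSet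
  calc volume K + volume L = volume ((fun x => x + b) '' K) + volume ((fun x => a + x) '' L) := by
        simp [Set.image_add_right, Set.image_add_left]
    _ = volume (((fun x => x + b) '' K) ∪ ((fun x => a + x) '' L)) :=
        (measure_union₀ hm hd).symm
    _ ≤ _ := measure_mono (Set.union_subset h1 h2)

lemma bm_one {A B C : Set ℝ} (hA : MeasurableSet A) (hB : MeasurableSet B)
    (hAn : A.Nonempty) (hBn : B.Nonempty)
    (h : ∀ x ∈ A, ∀ y ∈ B, (x + y) / 2 ∈ C) : volume A + volume B ≤ 2 * volume C := by
  have key : ∀ S : Set ℝ, S ⊆ {z | z / 2 ∈ C} → volume S ≤ 2 * volume C := by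
    intro S hS
    have : {z : ℝ | z / 2 ∈ C} = (fun z => (2:ℝ)⁻¹ * z) ⁻¹' C := by
      ext z; simp [div_eq_inv_mul]
    calc volume S ≤ volume ((fun z => (2:ℝ)⁻¹ * z) ⁻¹' C) := by
          rw [← this]; exact measure_mono hS
      _ = 2 * volume C := by
          rw [Real.volume_preimage_mul_left (by norm_num)]
          simp
  obtain ⟨a, ha⟩ := hAn
  obtain ⟨b, hb⟩ := hBn
  have hsup : ∀ r < volume A, ∀ s < volume B, r + s ≤ 2 * volume C := by
    intro r hr s hs
    obtain ⟨K, hKA, hK, hrK⟩ := hA.exists_lt_isCompact hr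
    obtain ⟨L, hLB, hL, hsL⟩ := hB.exists_lt_isCompact hs
    have hKn : K.Nonempty := by
      by_contra hne
      rw [Set.not_nonempty_iff_eq_empty] at hne
      simp [hne] at hrK
    have hLn : L.Nonempty := by
      by_contra hne
      rw [Set.not_nonempty_iff_eq_empty] at hne
      simp [hne] at hsL
    refine (add_le_add hrK.le hsL.le).trans ((bm_compact hK hL hKn hLn).trans (key _ ?_))
    rintro _ ⟨x, hx, y, hy, rfl⟩
    exact h x (hKA hx) y (hLB hy)
  have hA' : volume A ≤ 2 * volume C := by
    calc volume A = volume ((fun x => x + b) '' A) := by simp [Set.image_add_right]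
      _ ≤ _ := key _ (by rintro _ ⟨x, hx, rfl⟩; exact h x hx b hb)
  have hB' : volume B ≤ 2 * volume C := by
    calc volume B = volume ((fun x => a + x) '' B) := by simp [Set.image_add_left]
      _ ≤ _ := key _ (by rintro _ ⟨x, hx, rfl⟩; exact h a ha x hx)
  rcases eq_or_ne (volume A) 0 with h0 | h0
  · simpa [h0] using hB'
  rcases eq_or_ne (volume B) 0 with h1 | h1
  · simpa [h1] using hA'
  refine le_of_forall_lt fun c hc => ?_
  obtain ⟨r, hr, s, hs, hrs⟩ := ENNReal.exists_lt_add_of_lt_add hc h0 h1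
  exact hrs.trans_le (hsup r hr s hs)

lemma pl_norm {f g : ℝ → ℝ} {h : ℝ → ℝ≥0∞} (hf : Measurable f) (hg : Measurable g)
    (hh : Measurable h) (hf0 : ∀ x, 0 ≤ f x) (hg0 : ∀ x, 0 ≤ g x)
    (hf1 : ∀ x, f x ≤ 1) (hg1 : ∀ x, g x ≤ 1)
    (hfs : ∀ s < 1, ∃ x, s < f x) (hgs : ∀ s < 1, ∃ x, s < g x)
    (H : ∀ x y, ENNReal.ofReal (f x * g y) ≤ h ((x + y) / 2) ^ 2) :
    (∫⁻ x, ENNReal.ofReal (f x)) + (∫⁻ x, ENNReal.ofReal (g x)) ≤ 2 * ∫⁻ x, h x := by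
  set k : ℝ → ℝ := fun x => (min (h x) 1).toReal with hk
  have hkm : Measurable k := (hh.min measurable_const).ennreal_toReal
  have hkh : ∀ x, ENNReal.ofReal (k x) ≤ h x := by
    intro x
    rw [hk, ENNReal.ofReal_toReal (ne_top_of_le_ne_top ENNReal.one_ne_top (min_le_right _ _))]
    exact min_le_left _ _
  have e1 := lintegral_eq_lintegral_meas_lt volume (f := f) (ae_of_all _ hf0) hf.aemeasurable
  have e2 := lintegral_eq_lintegral_meas_lt volume (f := g) (ae_of_all _ hg0) hg.aemeasurable
  have e3 := lintegral_eq_lintegral_meas_lt volume (f := k)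
    (ae_of_all _ fun x => ENNReal.toReal_nonneg) hkm.aemeasurable
  calc _ = ∫⁻ t in Set.Ioi (0:ℝ), (volume {a | t < f a} + volume {a | t < g a}) := by
        rw [e1, e2, lintegral_add_left]
        exact (Antitone.measurable fun s t hst => measure_mono fun x hx => lt_of_le_of_lt hst hx)
    _ ≤ ∫⁻ t in Set.Ioi (0:ℝ), 2 * volume {a | t < k a} := by
        refine setLIntegral_mono' measurableSet_Ioi fun t ht => ?_
        have ht : 0 < t := ht
        by_cases h1 : t < 1
        · refine bm_one (measurableSet_lt measurable_const hf) (measurableSet_lt measurable_const hg)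
            (hfs t h1) (hgs t h1) fun x hx y hy => ?_
          have hx : t < f x := hx
          have hy : t < g y := hy
          have h2 : t * t < f x * g y := mul_lt_mul'' hx hy ht.le ht.le
          have h3 : ENNReal.ofReal t < h ((x + y) / 2) := by
            by_contra hcon
            push Not at hcon
            have h4 := (H x y).trans (pow_le_pow_left' hcon 2)
            rw [← ENNReal.ofReal_pow ht.le] at h4
            have h5 := (ENNReal.ofReal_le_ofReal_iff (by positivity)).1 h4
            nlinarith
          show t < k _
          have h6 : ENNReal.ofReal t < min (h ((x + y) / 2)) 1 :=
            lt_min h3 (by simpa using h1)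
          rw [hk]
          exact (ENNReal.ofReal_lt_iff_lt_toReal ht.le
            (ne_top_of_le_ne_top ENNReal.one_ne_top (min_le_right _ _))).1 h6
        · have a1 : {a | t < f a} = ∅ := by
            ext x; simpa using (hf1 x).trans (not_lt.1 h1)
          have a2 : {a | t < g a} = ∅ := by
            ext x; simpa using (hg1 x).trans (not_lt.1 h1)
          simp [a1, a2]
    _ = 2 * ∫⁻ x, ENNReal.ofReal (k x) := by
        rw [e3, lintegral_const_mul]
        exact (Antitone.measurable fun s t hst => measure_mono fun x hx => lt_of_le_of_lt hst hx)
    _ ≤ _ := by gcongr; exact hkh _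

lemma ennreal_amgm (x y : ℝ≥0∞) : 4 * (x * y) ≤ (x + y) ^ 2 := by
  rcases eq_or_ne x ⊤ with rfl | hx
  · simp
  rcases eq_or_ne y ⊤ with rfl | hy
  · simp
  lift x to ℝ≥0 using hx
  lift y to ℝ≥0 using hy
  norm_cast
  rw [← NNReal.coe_le_coe]
  push_cast
  nlinarith [sq_nonneg ((x:ℝ) - y)]

lemma pl_bdd {F G H : ℝ → ℝ≥0∞} (hF : Measurable F) (hG : Measurable G) (hH : Measurable H)
    {k : ℝ≥0} (hFk : ∀ x, F x ≤ k) (hGk : ∀ x, G x ≤ k)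
    (h : ∀ x y, F x * G y ≤ H ((x + y) / 2) ^ 2) :
    (∫⁻ x, F x) * (∫⁻ x, G x) ≤ (∫⁻ x, H x) ^ 2 := by
  set a := ⨆ x, F x with ha
  set b := ⨆ x, G x with hb
  have hat : a ≠ ⊤ := ne_top_of_le_ne_top ENNReal.coe_ne_top (iSup_le hFk)
  have hbt : b ≠ ⊤ := ne_top_of_le_ne_top ENNReal.coe_ne_top (iSup_le hGk)
  have hFa : ∀ x, F x ≤ a := le_iSup F
  have hGb : ∀ x, G x ≤ b := le_iSup G
  rcases eq_or_ne a 0 with h0 | h0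
  · have : ∀ x, F x = 0 := fun x => le_antisymm (h0 ▸ hFa x) bot_le
    simp [this]
  rcases eq_or_ne b 0 with h0' | h0'
  · have : ∀ x, G x = 0 := fun x => le_antisymm (h0' ▸ hGb x) bot_le
    simp [this]
  have hFt : ∀ x, F x ≠ ⊤ := fun x => ne_top_of_le_ne_top hat (hFa x)
  have hGt : ∀ x, G x ≠ ⊤ := fun x => ne_top_of_le_ne_top hbt (hGb x)
  have ha0 : 0 < a.toReal := ENNReal.toReal_pos h0 hat
  have hb0 : 0 < b.toReal := ENNReal.toReal_pos h0' hbt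
  set c : ℝ≥0∞ := ENNReal.ofReal (√(a.toReal * b.toReal)) with hc
  have hcpos : 0 < √(a.toReal * b.toReal) := by positivity
  have hc0 : c ≠ 0 := (ENNReal.ofReal_pos.2 hcpos).ne'
  have hct : c ≠ ⊤ := ENNReal.ofReal_ne_top
  have hcc : c ^ 2 = a * b := by
    rw [hc, ← ENNReal.ofReal_pow hcpos.le, Real.sq_sqrt (by positivity),
      ENNReal.ofReal_mul ha0.le, ENNReal.ofReal_toReal hat, ENNReal.ofReal_toReal hbt]
  have eF : ∀ x, ENNReal.ofReal ((F x).toReal / a.toReal) = a⁻¹ * F x := by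
    intro x
    rw [ENNReal.ofReal_div_of_pos ha0, ENNReal.ofReal_toReal hat, ENNReal.ofReal_toReal (hFt x),
      div_eq_mul_inv, mul_comm]
  have eG : ∀ x, ENNReal.ofReal ((G x).toReal / b.toReal) = b⁻¹ * G x := by
    intro x
    rw [ENNReal.ofReal_div_of_pos hb0, ENNReal.ofReal_toReal hbt, ENNReal.ofReal_toReal (hGt x),
      div_eq_mul_inv, mul_comm]
  have sup : ∀ (P : ℝ → ℝ≥0∞) (d : ℝ≥0∞), d ≠ ⊤ → d ≠ 0 → (∀ x, P x ≠ ⊤) → d = ⨆ x, P x →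
      ∀ s < (1:ℝ), ∃ x, s < (P x).toReal / d.toReal := by
    intro P d hdt hd0 hPt hd s hs
    have hdp : 0 < d.toReal := ENNReal.toReal_pos hd0 hdt
    rcases lt_or_ge s 0 with hs0 | hs0
    · exact ⟨0, hs0.trans_le (by positivity)⟩
    have : ENNReal.ofReal (s * d.toReal) < d := by
      rw [ENNReal.ofReal_lt_iff_lt_toReal (by positivity) hdt]
      nlinarith
    rw [hd] at this
    obtain ⟨x, hx⟩ := lt_iSup_iff.1 this
    rw [← hd] at hx
    refine ⟨x, ?_⟩
    rw [lt_div_iff₀ hdp]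
    exact (ENNReal.ofReal_lt_iff_lt_toReal (by positivity) (hPt x)).1 hx
  have key := pl_norm (f := fun x => (F x).toReal / a.toReal) (g := fun x => (G x).toReal / b.toReal)
    (h := fun x => c⁻¹ * H x) (hF.ennreal_toReal.div_const _) (hG.ennreal_toReal.div_const _)
    (hH.const_mul _) (fun x => by positivity) (fun x => by positivity)
    (fun x => by
      rw [div_le_one ha0]; exact ENNReal.toReal_mono hat (hFa x))
    (fun x => by
      rw [div_le_one hb0]; exact ENNReal.toReal_mono hbt (hGb x))
    (sup F a hat h0 hFt ha) (sup G b hbt h0' hGt hb)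
    (fun x y => by
      rw [ENNReal.ofReal_mul (by positivity), eF, eG, mul_pow, ← ENNReal.inv_pow, hcc,
        ENNReal.mul_inv (Or.inl h0) (Or.inl hat)]
      calc a⁻¹ * F x * (b⁻¹ * G y) = a⁻¹ * b⁻¹ * (F x * G y) := by ring
        _ ≤ _ := by gcongr; exact h x y)
  simp_rw [eF, eG] at key
  rw [lintegral_const_mul _ hF, lintegral_const_mul _ hG, lintegral_const_mul _ hH] at key
  have k2 := (ennreal_amgm _ _).trans (pow_le_pow_left' key 2)
  have k3 : 4 * ((a * b)⁻¹ * ((∫⁻ x, F x) * (∫⁻ x, G x))) ≤ 4 * ((a * b)⁻¹ * (∫⁻ x, H x) ^ 2) := by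
    refine le_of_eq_of_le ?_ (k2.trans_eq ?_)
    · rw [ENNReal.mul_inv (Or.inl h0) (Or.inl hat)]; ring
    · rw [mul_pow, mul_pow, ← ENNReal.inv_pow, hcc]; norm_num
  rw [ENNReal.mul_le_mul_iff_right (by norm_num) (by norm_num),
    ENNReal.mul_le_mul_iff_right] at k3
  · exact k3
  · simp [ENNReal.mul_ne_top hat hbt]
  · simp [h0, h0']

lemma pl_one {F G H : ℝ → ℝ≥0∞} (hF : Measurable F) (hG : Measurable G) (hH : Measurable H)
    (h : ∀ x y, F x * G y ≤ H ((x + y) / 2) ^ 2) :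
    (∫⁻ x, F x) * (∫⁻ x, G x) ≤ (∫⁻ x, H x) ^ 2 := by
  have lim : ∀ P : ℝ → ℝ≥0∞, Measurable P →
      ∫⁻ x, P x = ⨆ k : ℕ, ∫⁻ x, min (P x) (k : ℝ≥0∞) := by
    intro P hP
    rw [← lintegral_iSup (fun k => hP.min measurable_const)]
    · congr with x
      apply le_antisymm
      · refine le_of_forall_lt fun c hc => ?_
        obtain ⟨k, hk⟩ := ENNReal.exists_nat_gt hc.ne_top
        exact lt_of_lt_of_le (lt_min hc hk) (le_iSup (fun k : ℕ => min (P x) (k : ℝ≥0∞)) k)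
      · exact iSup_le fun k => min_le_left _ _
    · intro i j hij x
      exact min_le_min le_rfl (by exact_mod_cast hij)
  have mono : ∀ P : ℝ → ℝ≥0∞, Monotone fun k : ℕ => ∫⁻ x, min (P x) (k : ℝ≥0∞) := by
    intro P i j hij
    exact lintegral_mono fun x => min_le_min le_rfl (by exact_mod_cast hij)
  rw [lim F hF, lim G hG, ENNReal.iSup_mul]
  refine iSup_le fun i => ?_
  rw [ENNReal.mul_iSup]
  refine iSup_le fun j => ?_
  have := pl_bdd (F := fun x => min (F x) (max i j : ℕ)) (G := fun x => min (G x) (max i j : ℕ))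
    (k := ((max i j : ℕ) : ℝ≥0)) (hF.min measurable_const) (hG.min measurable_const) hH
    (fun x => by rw [ENNReal.coe_natCast]; exact min_le_right _ _)
    (fun x => by rw [ENNReal.coe_natCast]; exact min_le_right _ _)
    (fun x y => (mul_le_mul' (min_le_left _ _) (min_le_left _ _)).trans (h x y))
  exact (mul_le_mul' (mono F (le_max_left i j)) (mono G (le_max_right i j))).trans this

/-- Prékopa–Leindler with weight one half on `ℝⁿ`. -/
lemma pl_pi (n : ℕ) : ∀ {F G H : (Fin n → ℝ) → ℝ≥0∞}, Measurable F → Measurable G →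
    Measurable H → (∀ x y, F x * G y ≤ H ((2:ℝ)⁻¹ • (x + y)) ^ 2) →
    (∫⁻ x, F x) * (∫⁻ x, G x) ≤ (∫⁻ x, H x) ^ 2 := by
  induction n with
  | zero =>
    intro F G H hF hG hH h
    have e : ∀ P : (Fin 0 → ℝ) → ℝ≥0∞, ∫⁻ x, P x = P 0 := by
      intro P
      rw [volume_pi, Measure.pi_of_empty _ (0 : Fin 0 → ℝ), lintegral_dirac]
    rw [e, e, e]
    simpa using h 0 0
  | succ n ih =>
    intro F G H hF hG hH h
    have e : ∀ P : (Fin (n+1) → ℝ) → ℝ≥0∞, Measurable P →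
        ∫⁻ x, P x = ∫⁻ s, ∫⁻ x : Fin n → ℝ, P (Fin.cons s x) := by
      intro P hP
      have mp := (volume_preserving_piFinSuccAbove (fun _ : Fin (n+1) => ℝ) 0).symm
      rw [← mp.lintegral_comp hP, Measure.volume_eq_prod]
      rw [lintegral_prod _ (by
        exact (hP.comp (MeasurableEquiv.measurable _)).aemeasurable)]
      refine lintegral_congr fun s => lintegral_congr fun x => ?_
      congr 1
      simp [MeasurableEquiv.piFinSuccAbove, Fin.insertNthEquiv]
    have mc : Measurable fun p : ℝ × (Fin n → ℝ) => (Fin.cons p.1 p.2 : Fin (n+1) → ℝ) := by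
      refine measurable_pi_iff.2 fun i => ?_
      refine Fin.cases ?_ (fun j => ?_) i
      · simpa using measurable_fst
      · simp only [Fin.cons_succ]; fun_prop
    have ms : ∀ s : ℝ, Measurable fun x : Fin n → ℝ => (Fin.cons s x : Fin (n+1) → ℝ) :=
      fun s => mc.comp (measurable_const.prodMk measurable_id)
    rw [e F hF, e G hG, e H hH]
    refine pl_one (hF.comp mc).lintegral_prod_right' (hG.comp mc).lintegral_prod_right'
      (hH.comp mc).lintegral_prod_right' fun s t => ?_
    refine ih (hF.comp (ms s)) (hG.comp (ms t)) (hH.comp (ms _)) fun x y => ?_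
    convert h (Fin.cons s x) (Fin.cons t y) using 3
    ext i
    refine Fin.cases ?_ (fun j => ?_) i
    · simp; ring
    · simp; ring

lemma pl_euc (n : ℕ) {F G H : EuclideanSpace ℝ (Fin n) → ℝ≥0∞} (hF : Measurable F)
    (hG : Measurable G)
    (hH : Measurable H) (h : ∀ x y, F x * G y ≤ H ((2:ℝ)⁻¹ • (x + y)) ^ 2) :
    (∫⁻ x, F x) * (∫⁻ x, G x) ≤ (∫⁻ x, H x) ^ 2 := by
  have mp := PiLp.volume_preserving_toLp (Fin n)
  rw [← mp.lintegral_comp hF, ← mp.lintegral_comp hG, ← mp.lintegral_comp hH]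
  refine pl_pi n (hF.comp mp.measurable) (hG.comp mp.measurable) (hH.comp mp.measurable) fun x y => ?_
  exact h _ _

/-- Midpoint Prékopa–Leindler property of a measure. -/
def MidLC {E : Type*} [AddCommGroup E] [Module ℝ E] [MeasurableSpace E] (μ : Measure E) : Prop :=
  ∀ F G H : E → ℝ≥0∞, Measurable F → Measurable G → Measurable H →
    (∀ x y, F x * G y ≤ H ((2:ℝ)⁻¹ • (x + y)) ^ 2) →
    (∫⁻ x, F x ∂μ) * (∫⁻ x, G x ∂μ) ≤ (∫⁻ x, H x ∂μ) ^ 2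

lemma midLC_of_logConcave {n : ℕ} {f : EuclideanSpace ℝ (Fin n) → ℝ} (hf : IsLogConcaveFn f) :
    MidLC (volume.withDensity fun x => ENNReal.ofReal (f x)) := by
  obtain ⟨hf0, hlc⟩ := hf
  set S : Set (EuclideanSpace ℝ (Fin n)) := {x | 0 < f x} with hS
  have hSc : Convex ℝ S := by
    intro x hx y hy a b ha hb hab
    have hx : 0 < f x := hx
    have hy : 0 < f y := hy
    have := hlc x y a ha (by linarith)
    rw [show 1 - a = b by linarith] at this
    exact lt_of_lt_of_le (by positivity) this
  have hconc : ConcaveOn ℝ S (fun x => Real.log (f x)) := by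
    refine ⟨hSc, ?_⟩
    intro x hx y hy a b ha hb hab
    have hx : 0 < f x := hx
    have hy : 0 < f y := hy
    have := hlc x y a ha (by linarith)
    rw [show 1 - a = b by linarith] at this
    have h2 := Real.log_le_log (by positivity) this
    rw [Real.log_mul (by positivity) (by positivity), Real.log_rpow hx, Real.log_rpow hy] at h2
    simpa using h2
  set U := interior S with hU
  have hcont : ContinuousOn f U := by
    have h1 : ContinuousOn (fun x => Real.exp (Real.log (f x))) U :=
      Real.continuous_exp.comp_continuousOn hconc.continuousOn_interior
    refine h1.congr fun x hx => ?_
    have : x ∈ S := interior_subset hx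
    have : 0 < f x := this
    exact (Real.exp_log this).symm
  set g : EuclideanSpace ℝ (Fin n) → ℝ := U.indicator f with hg
  have hgm : Measurable g := by
    classical
    have := ContinuousOn.measurable_piecewise (f := f) (g := (0 : EuclideanSpace ℝ (Fin n) → ℝ)) (s := U) hcont
      continuousOn_const isOpen_interior.measurableSet
    rwa [Set.piecewise_eq_indicator] at this
  have hfg : (fun x => ENNReal.ofReal (f x)) =ᵐ[volume] fun x => ENNReal.ofReal (g x) := by
    have h0 : volume (frontier S) = 0 := hSc.addHaar_frontier volume
    have : ∀ᵐ x ∂(volume : Measure (EuclideanSpace ℝ (Fin n))), x ∉ frontier S :=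
      measure_eq_zero_iff_ae_notMem.1 h0
    filter_upwards [this] with x hx
    congr 1
    by_cases hxU : x ∈ U
    · simp [hg, hxU]
    · have : x ∉ S := fun h => hx ⟨subset_closure h, hxU⟩
      have h1 : f x = 0 := le_antisymm (not_lt.1 this) (hf0 x)
      simp [hg, hxU, h1]
  have hgg : ∀ x y, ENNReal.ofReal (g x) * ENNReal.ofReal (g y) ≤
      ENNReal.ofReal (g ((2:ℝ)⁻¹ • (x + y))) ^ 2 := by
    intro x y
    by_cases hx : x ∈ U
    swap
    · simp [hg, hx]
    by_cases hy : y ∈ U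
    swap
    · simp [hg, hy]
    have hm : (2:ℝ)⁻¹ • (x + y) ∈ U := by
      have := hSc.interior hx hy (by norm_num : (0:ℝ) ≤ 2⁻¹) (by norm_num : (0:ℝ) ≤ 2⁻¹) (by norm_num)
      rwa [← smul_add] at this
    have hfx := hf0 x
    have hfy := hf0 y
    have h1 := hlc x y 2⁻¹ (by norm_num) (by norm_num)
    rw [show (1:ℝ) - 2⁻¹ = 2⁻¹ by norm_num, ← smul_add, ← Real.mul_rpow hfx hfy] at h1
    have h2 : f x * f y ≤ f ((2:ℝ)⁻¹ • (x + y)) ^ 2 := by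
      have h3 := pow_le_pow_left₀ (by positivity) h1 2
      rwa [← Real.rpow_natCast, ← Real.rpow_mul (by positivity), show (2:ℝ)⁻¹ * ((2:ℕ):ℝ) = 1 by norm_num,
        Real.rpow_one] at h3
    simp only [hg, Set.indicator_of_mem hx, Set.indicator_of_mem hy, Set.indicator_of_mem hm]
    rw [← ENNReal.ofReal_mul hfx, ← ENNReal.ofReal_pow (hf0 _)]
    exact ENNReal.ofReal_le_ofReal h2
  rw [withDensity_congr_ae hfg]
  intro F G H hF hG hH h
  have hgm' : Measurable fun x => ENNReal.ofReal (g x) := hgm.ennreal_ofReal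
  rw [lintegral_withDensity_eq_lintegral_mul _ hgm' hF, lintegral_withDensity_eq_lintegral_mul _ hgm' hG,
    lintegral_withDensity_eq_lintegral_mul _ hgm' hH]
  refine pl_euc n (hgm'.mul hF) (hgm'.mul hG) (hgm'.mul hH) fun x y => ?_
  simp only [Pi.mul_apply]
  calc _ = (ENNReal.ofReal (g x) * ENNReal.ofReal (g y)) * (F x * G y) := by ring
    _ ≤ _ := mul_le_mul' (hgg x y) (h x y)
    _ = _ := by ring

lemma MidLC.restrict {E : Type*} [NormedAddCommGroup E] [NormedSpace ℝ E] [MeasurableSpace E]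
    {μ : Measure E} (hμ : MidLC μ) {K : Set E} (hK : Convex ℝ K) (hKm : MeasurableSet K)
    (c : ℝ≥0∞) : MidLC (c • μ.restrict K) := by
  intro F G H hF hG hH h
  simp only [lintegral_smul_measure, smul_eq_mul]
  rw [← lintegral_indicator hKm, ← lintegral_indicator hKm, ← lintegral_indicator hKm]
  have := hμ (K.indicator F) (K.indicator G) (K.indicator H) (hF.indicator hKm) (hG.indicator hKm)
    (hH.indicator hKm) (by
      intro x y
      by_cases hx : x ∈ K
      swap
      · simp [hx]
      by_cases hy : y ∈ K
      swap
      · simp [hy]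
      have hm : (2:ℝ)⁻¹ • (x + y) ∈ K := by
        have := hK hx hy (by norm_num : (0:ℝ) ≤ 2⁻¹) (by norm_num : (0:ℝ) ≤ 2⁻¹) (by norm_num)
        rwa [← smul_add] at this
      rw [Set.indicator_of_mem hx, Set.indicator_of_mem hy, Set.indicator_of_mem hm]
      exact h x y)
  calc _ = c ^ 2 * ((∫⁻ x, K.indicator F x ∂μ) * (∫⁻ x, K.indicator G x ∂μ)) := by ring
    _ ≤ c ^ 2 * (∫⁻ x, K.indicator H x ∂μ) ^ 2 := by gcongr
    _ = _ := by ring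

section Borell
variable {E : Type*} [AddCommGroup E] [Module ℝ E] [MeasurableSpace E]

lemma borell_step {μ : Measure E} [IsProbabilityMeasure μ] (hμ : MidLC μ) {p : E → ℝ}
    (hpm : Measurable p) (hp : ∀ x y, p x ≤ 2 * p ((2:ℝ)⁻¹ • (x + y)) + p y) (r s : ℝ) :
    μ.real {x | 2 * s + r < p x} * (1 - μ.real {x | r < p x}) ≤ μ.real {x | s < p x} ^ 2 := by
  have m1 : ∀ t : ℝ, MeasurableSet {x | t < p x} := fun t => measurableSet_lt measurable_const hpm
  have h := hμ ({x | 2 * s + r < p x}.indicator 1) ({x | r < p x}ᶜ.indicator 1)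
    ({x | s < p x}.indicator 1) (measurable_one.indicator (m1 _))
    (measurable_one.indicator (m1 _).compl) (measurable_one.indicator (m1 _)) (by
      intro x y
      by_cases hx : x ∈ {x | 2 * s + r < p x}
      swap
      · simp [Set.indicator_of_notMem hx]
      by_cases hy : y ∈ {x | r < p x}ᶜ
      swap
      · simp [Set.indicator_of_notMem hy]
      have hm : (2:ℝ)⁻¹ • (x + y) ∈ {x | s < p x} := by
        simp only [Set.mem_ofPred_eq, Set.mem_compl_iff, not_lt] at hx hy ⊢
        linarith [hp x y]
      rw [Set.indicator_of_mem hx, Set.indicator_of_mem hy, Set.indicator_of_mem hm]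
      simp)
  rw [lintegral_indicator_one (m1 _), lintegral_indicator_one (m1 _).compl,
    lintegral_indicator_one (m1 _)] at h
  have h2 := ENNReal.toReal_mono (by simp) h
  rw [ENNReal.toReal_mul, ENNReal.toReal_pow] at h2
  have h3 := probReal_compl_eq_one_sub (μ := μ) (m1 r)
  rw [← h3]
  exact h2

lemma borell_tail {μ : Measure E} [IsProbabilityMeasure μ] (hμ : MidLC μ) {p : E → ℝ}
    (hpm : Measurable p) (hp : ∀ x y, p x ≤ 2 * p ((2:ℝ)⁻¹ • (x + y)) + p y) (r : ℝ)
    (ha : μ.real {x | r < p x} ≤ 1 / 9) (k : ℕ) :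
    μ.real {x | r * (2 ^ (k + 1) - 1) < p x} ≤ 8 * μ.real {x | r < p x} * (1 / 8) ^ (2 ^ k) := by
  induction k with
  | zero => norm_num; linarith
  | succ k ih =>
    have h1 := borell_step hμ hpm hp r (r * (2 ^ (k + 1) - 1))
    rw [show 2 * (r * (2 ^ (k + 1) - 1)) + r = r * (2 ^ (k + 1 + 1) - 1) by ring] at h1
    set a := μ.real {x | r < p x}
    set b := μ.real {x | r * (2 ^ (k + 1 + 1) - 1) < p x}
    set d := μ.real {x | r * (2 ^ (k + 1) - 1) < p x}
    have ha0 : 0 ≤ a := measureReal_nonneg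
    have hb0 : 0 ≤ b := measureReal_nonneg
    have hd0 : 0 ≤ d := measureReal_nonneg
    have h2 : d ^ 2 ≤ (8 * a * (1 / 8) ^ (2 ^ k)) ^ 2 := pow_le_pow_left₀ hd0 ih 2
    have h3 : (8 * a * (1 / 8 : ℝ) ^ (2 ^ k)) ^ 2 = 64 * a ^ 2 * (1 / 8) ^ (2 ^ (k + 1)) := by
      rw [mul_pow, ← pow_mul, pow_succ 2 k]; ring
    rw [h3] at h2
    set e : ℝ := (1 / 8) ^ (2 ^ (k + 1))
    have he : 0 ≤ e := by positivity
    have h4 : b * (8 / 9) ≤ b * (1 - a) := mul_le_mul_of_nonneg_left (by linarith) hb0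
    have h5 : a * a * e ≤ 1 / 9 * a * e := by gcongr
    nlinarith

lemma borell_exp {μ : Measure E} [IsProbabilityMeasure μ] (hμ : MidLC μ) {p : E → ℝ}
    (hpm : Measurable p) (hp : ∀ x y, p x ≤ 2 * p ((2:ℝ)⁻¹ • (x + y)) + p y) {r : ℝ} (hr : 0 < r)
    (ha : μ.real {x | r < p x} ≤ 1 / 9) :
    ∫⁻ x in {x | r < p x}, ENNReal.ofReal (Real.exp (p x / (4 * r))) ∂μ ≤
      ENNReal.ofReal (8 * μ.real {x | r < p x}) := by
  have m1 : ∀ t : ℝ, MeasurableSet {x | t < p x} := fun t => measurableSet_lt measurable_const hpm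
  set a := μ.real {x | r < p x} with hadef
  have ha0 : 0 ≤ a := measureReal_nonneg
  set T : ℕ → ℝ := fun k => r * (2 ^ (k + 1) - 1) with hT
  have hpt : ∀ x ∈ {x | r < p x}, ENNReal.ofReal (Real.exp (p x / (4 * r))) ≤
      ∑' k : ℕ, {x | T k < p x}.indicator (fun _ => ENNReal.ofReal (Real.exp (2 ^ k))) x := by
    intro x hx
    have hx : r < p x := hx
    have hex : ∃ k : ℕ, p x ≤ T (k + 1) := by
      obtain ⟨k, hk⟩ := pow_unbounded_of_one_lt (p x / r + 1) (by norm_num : (1:ℝ) < 2)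
      refine ⟨k, ?_⟩
      have h2 : (2:ℝ) ^ k ≤ 2 ^ (k + 1 + 1) := pow_le_pow_right₀ (by norm_num) (by omega)
      have h3 : p x / r < 2 ^ (k + 1 + 1) - 1 := by linarith
      rw [div_lt_iff₀ hr] at h3
      simp only [hT]
      linarith
    classical
    set k := Nat.find hex with hk
    have h1 : p x ≤ T (k + 1) := Nat.find_spec hex
    have h2 : T k < p x := by
      rcases Nat.eq_zero_or_pos k with h0 | h0
      · rw [h0]; simp only [hT]; norm_num; exact hx
      · have := Nat.find_min hex (m := k - 1) (by omega)
        rw [not_le, Nat.sub_add_cancel h0] at this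
        exact this
    refine le_trans ?_ (ENNReal.le_tsum k)
    rw [Set.indicator_of_mem (by exact h2)]
    refine ENNReal.ofReal_le_ofReal (Real.exp_le_exp.2 ?_)
    rw [div_le_iff₀ (by positivity)]
    simp only [hT] at h1
    have : (2:ℝ) ^ (k + 1 + 1) = 4 * 2 ^ k := by ring
    rw [this] at h1
    nlinarith
  calc _ ≤ ∫⁻ x in {x | r < p x}, ∑' k : ℕ,
        {x | T k < p x}.indicator (fun _ => ENNReal.ofReal (Real.exp (2 ^ k))) x ∂μ :=
        setLIntegral_mono' (m1 r) hpt
    _ ≤ ∫⁻ x, ∑' k : ℕ,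
        {x | T k < p x}.indicator (fun _ => ENNReal.ofReal (Real.exp (2 ^ k))) x ∂μ :=
        setLIntegral_le_lintegral _ _
    _ = ∑' k : ℕ, ENNReal.ofReal (Real.exp (2 ^ k)) * μ {x | T k < p x} := by
        rw [lintegral_tsum]
        · congr with k
          rw [lintegral_indicator_const (m1 _)]
        · exact fun k => (measurable_const.indicator (m1 _)).aemeasurable
    _ ≤ ∑' k : ℕ, ENNReal.ofReal (8 * a * (1 / 2) ^ (k + 1)) := by
        refine ENNReal.tsum_le_tsum fun k => ?_
        rw [← ofReal_measureReal, ← ENNReal.ofReal_mul (by positivity)]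
        refine ENNReal.ofReal_le_ofReal ?_
        have h1 := borell_tail hμ hpm hp r ha k
        have he : Real.exp (2 ^ k) * (1 / 8) ^ (2 ^ k) ≤ (1 / 2) ^ (k + 1) := by
          have e1 : Real.exp (2 ^ k) = Real.exp 1 ^ (2 ^ k) := by
            rw [← Real.exp_nat_mul]; push_cast; ring_nf
          rw [e1, ← mul_pow]
          calc (Real.exp 1 * (1 / 8)) ^ 2 ^ k ≤ (1 / 2) ^ 2 ^ k := by
                gcongr
                linarith [Real.exp_one_lt_d9]
            _ ≤ (1 / 2) ^ (k + 1) := by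
                apply pow_le_pow_of_le_one (by norm_num) (by norm_num)
                exact Nat.lt_two_pow_self
        calc _ ≤ Real.exp (2 ^ k) * (8 * a * (1 / 8) ^ (2 ^ k)) := by
              gcongr
          _ = 8 * a * (Real.exp (2 ^ k) * (1 / 8) ^ (2 ^ k)) := by ring
          _ ≤ _ := by gcongr
    _ = ENNReal.ofReal (8 * a) := by
        have hs : HasSum (fun k : ℕ => 8 * a * (1 / 2 : ℝ) ^ (k + 1)) (8 * a) := by
          have := hasSum_geometric_two.mul_left (8 * a * (1 / 2))
          have e1 : (fun k : ℕ => 8 * a * (1 / 2 : ℝ) ^ (k + 1)) =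
              fun k : ℕ => 8 * a * (1 / 2) * (1 / 2) ^ k := by
            funext k; rw [pow_succ]; ring
          have e2 : 8 * a * (1 / 2) * 2 = 8 * a := by ring
          rw [e2] at this
          rw [e1]
          exact this
        rw [← ENNReal.ofReal_tsum_of_nonneg (fun k => by positivity) hs.summable, hs.tsum_eq]

end Borell

lemma gauss_exists (n : ℕ) {t : ℝ} (ht : 0 < t) :
    ∃ γ : Measure (EuclideanSpace ℝ (Fin n)), IsProbabilityMeasure γ ∧
      ∀ x : EuclideanSpace ℝ (Fin n), Integrable (fun θ => Real.exp ⟪θ, x⟫) γ ∧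
        ∫ θ, Real.exp ⟪θ, x⟫ ∂γ = Real.exp (t * ‖x‖ ^ 2 / 2) := by
  set g : Measure ℝ := gaussianReal 0 (NNReal.mk t ht.le) with hg
  have hgp : IsProbabilityMeasure g := by rw [hg]; infer_instance
  have hmeas : Measurable (WithLp.toLp 2 : (Fin n → ℝ) → EuclideanSpace ℝ (Fin n)) := by fun_prop
  refine ⟨(Measure.pi fun _ : Fin n => g).map (WithLp.toLp 2),
    Measure.isProbabilityMeasure_map hmeas.aemeasurable, fun x => ?_⟩
  have hm : Measurable fun θ : EuclideanSpace ℝ (Fin n) => Real.exp ⟪θ, x⟫ := by fun_prop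
  have e : ∀ v : Fin n → ℝ, Real.exp ⟪(WithLp.toLp 2 v : EuclideanSpace ℝ (Fin n)), x⟫ =
      ∏ i, Real.exp (x i * v i) := by
    intro v
    rw [← Real.exp_sum, PiLp.inner_apply]
    simp
  constructor
  · rw [integrable_map_measure hm.aestronglyMeasurable hmeas.aemeasurable]
    have : (fun θ : EuclideanSpace ℝ (Fin n) => Real.exp ⟪θ, x⟫) ∘ (WithLp.toLp 2) =
        fun v : Fin n → ℝ => ∏ i, Real.exp (x i * v i) := by
      funext v; exact e v
    rw [this]
    exact Integrable.fintype_prod (f := fun i s => Real.exp (x i * s))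
      fun i => integrable_exp_mul_gaussianReal (x i)
  · rw [integral_map hmeas.aemeasurable hm.aestronglyMeasurable]
    simp_rw [e]
    rw [integral_fintype_prod_eq_prod (fun i s => Real.exp (x i * s))]
    have h1 : ∀ i, ∫ s, Real.exp (x i * s) ∂g = Real.exp (t * x i ^ 2 / 2) := by
      intro i
      have := congrFun (mgf_fun_id_gaussianReal (μ := 0) (v := NNReal.mk t ht.le)) (x i)
      simp only [mgf] at this
      rw [hg, this, NNReal.coe_mk, zero_mul, zero_add]
    simp_rw [h1]
    rw [← Real.exp_sum, EuclideanSpace.real_norm_sq_eq, Finset.mul_sum, Finset.sum_div]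

lemma integrable_of_compact {α : Type*} [TopologicalSpace α] [MeasurableSpace α] [T2Space α]
    [OpensMeasurableSpace α] [SecondCountableTopology α]
    {μ : Measure α} [IsFiniteMeasure μ] {K : Set α} (hK : IsCompact K)
    (hμ : ∀ᵐ x ∂μ, x ∈ K) {h : α → ℝ} (hh : Continuous h) : Integrable h μ := by
  have h1 : IntegrableOn h K μ := hh.continuousOn.integrableOn_compact' hK hK.measurableSet
  rwa [IntegrableOn, Measure.restrict_eq_self_of_ae_mem hμ] at h1

section Core
variable {n : ℕ} {μ : Measure (EuclideanSpace ℝ (Fin n))} [IsProbabilityMeasure μ]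

/-- Gaussian tilt. -/
def tilt {n : ℕ} (t : ℝ) (θ x : EuclideanSpace ℝ (Fin n)) : ℝ :=
  Real.exp (⟪θ, x⟫ - t * ‖x‖ ^ 2 / 2)

lemma tilt_continuous (t : ℝ) (θ : EuclideanSpace ℝ (Fin n)) : Continuous (tilt t θ) := by
  unfold tilt; fun_prop

lemma tilt_pos (t : ℝ) (θ x : EuclideanSpace ℝ (Fin n)) : 0 < tilt t θ x := Real.exp_pos _

lemma tilt_tau (hμ : MidLC μ) {M : ℝ} (hM : ∀ᵐ x ∂μ, ‖x‖ ≤ M) {t : ℝ} (ht : 0 < t)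
    (θ : EuclideanSpace ℝ (Fin n)) (c : ℝ) :
    (∫ x, tilt t θ x * Real.exp (√t * (‖x‖ - c)) ∂μ) *
      (∫ x, tilt t θ x * Real.exp (-(√t * (‖x‖ - c))) ∂μ) ≤
      Real.exp 1 * (∫ x, tilt t θ x ∂μ) ^ 2 := by
  have hK : IsCompact (Metric.closedBall (0 : EuclideanSpace ℝ (Fin n)) M) :=
    isCompact_closedBall _ _
  have hKm : ∀ᵐ x ∂μ, x ∈ Metric.closedBall (0 : EuclideanSpace ℝ (Fin n)) M := by
    filter_upwards [hM] with x hx; simpa using hx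
  have hc := tilt_continuous (n := n) t θ
  have c1 : Continuous fun x : EuclideanSpace ℝ (Fin n) =>
    tilt t θ x * Real.exp (√t * (‖x‖ - c)) := by fun_prop
  have c2 : Continuous fun x : EuclideanSpace ℝ (Fin n) =>
    tilt t θ x * Real.exp (-(√t * (‖x‖ - c))) := by fun_prop
  have c3 : Continuous fun x : EuclideanSpace ℝ (Fin n) => Real.exp (1 / 2) * tilt t θ x := by
    fun_prop
  have hp := tilt_pos (n := n) t θ
  have key := hμ (fun x => ENNReal.ofReal (tilt t θ x * Real.exp (√t * (‖x‖ - c))))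
    (fun x => ENNReal.ofReal (tilt t θ x * Real.exp (-(√t * (‖x‖ - c)))))
    (fun x => ENNReal.ofReal (Real.exp (1 / 2) * tilt t θ x))
    c1.measurable.ennreal_ofReal c2.measurable.ennreal_ofReal c3.measurable.ennreal_ofReal (by
      intro x y
      have hx := hp x
      have hy := hp y
      have hz := hp ((2:ℝ)⁻¹ • (x + y))
      rw [← ENNReal.ofReal_mul (by positivity), ← ENNReal.ofReal_pow (by positivity)]
      refine ENNReal.ofReal_le_ofReal ?_
      unfold tilt
      simp only [← Real.exp_add, ← Real.exp_nat_mul]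
      refine Real.exp_le_exp.2 ?_
      have i1 : ⟪θ, (2:ℝ)⁻¹ • (x + y)⟫ = (⟪θ, x⟫ + ⟪θ, y⟫) / 2 := by
        rw [inner_smul_right, inner_add_right]; ring
      have i2 : ‖(2:ℝ)⁻¹ • (x + y)‖ ^ 2 = (2 * ‖x‖ ^ 2 + 2 * ‖y‖ ^ 2 - ‖x - y‖ ^ 2) / 4 := by
        rw [norm_smul, mul_pow]
        have := parallelogram_law_with_norm ℝ x y
        norm_num
        nlinarith
      rw [i1, i2]
      have i3 : ‖x‖ - ‖y‖ ≤ ‖x - y‖ := norm_sub_norm_le x y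
      have i4 : √t ^ 2 = t := Real.sq_sqrt ht.le
      have i5 : √t * (‖x‖ - ‖y‖) ≤ √t * ‖x - y‖ := mul_le_mul_of_nonneg_left i3 (Real.sqrt_nonneg t)
      have i6 : √t * ‖x - y‖ ≤ 1 + t * ‖x - y‖ ^ 2 / 4 := by
        nlinarith [sq_nonneg (1 - √t * ‖x - y‖ / 2)]
      push_cast
      nlinarith)
  rw [← ofReal_integral_eq_lintegral_ofReal (integrable_of_compact hK hKm c1)
      (ae_of_all _ fun x => (mul_pos (hp x) (Real.exp_pos _)).le),
    ← ofReal_integral_eq_lintegral_ofReal (integrable_of_compact hK hKm c2)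
      (ae_of_all _ fun x => (mul_pos (hp x) (Real.exp_pos _)).le),
    ← ofReal_integral_eq_lintegral_ofReal (integrable_of_compact hK hKm c3)
      (ae_of_all _ fun x => (mul_pos (Real.exp_pos _) (hp x)).le)] at key
  have n1 : 0 ≤ ∫ x, tilt t θ x * Real.exp (√t * (‖x‖ - c)) ∂μ :=
    integral_nonneg fun x => (mul_pos (hp x) (Real.exp_pos _)).le
  have n3 : 0 ≤ ∫ x, Real.exp (1 / 2) * tilt t θ x ∂μ :=
    integral_nonneg fun x => (mul_pos (Real.exp_pos _) (hp x)).le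
  rw [← ENNReal.ofReal_mul n1, ← ENNReal.ofReal_pow n3,
    ENNReal.ofReal_le_ofReal_iff (by positivity), integral_const_mul, mul_pow,
    ← Real.exp_nat_mul] at key
  refine key.trans_eq ?_
  norm_num

lemma exp_ge_quad (u : ℝ) : 2 + u ^ 2 ≤ Real.exp u + Real.exp (-u) := by
  have h : (u / 2) ^ 2 ≤ Real.sinh (u / 2) ^ 2 := by
    rcases le_total 0 (u / 2) with h | h
    · exact pow_le_pow_left₀ h (Real.self_le_sinh_iff.2 h) 2
    · have := Real.sinh_le_self_iff.2 h
      nlinarith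
  rw [Real.sinh_eq] at h
  have e1 : Real.exp u = Real.exp (u / 2) ^ 2 := by rw [← Real.exp_nat_mul]; congr 1; push_cast; ring
  have e2 : Real.exp (-u) = Real.exp (-(u / 2)) ^ 2 := by
    rw [← Real.exp_nat_mul]; congr 1; push_cast; ring
  have e3 : Real.exp (u / 2) * Real.exp (-(u / 2)) = 1 := by rw [← Real.exp_add]; simp
  rw [e1, e2]
  nlinarith

lemma tilt_var (hμ : MidLC μ) {M : ℝ} (hM : ∀ᵐ x ∂μ, ‖x‖ ≤ M) {t : ℝ} (ht : 0 < t)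
    (θ : EuclideanSpace ℝ (Fin n)) (m : ℝ) (hm0 : 0 ≤ m) (hmM : m ≤ M) :
    ∫ x, (‖x‖ - m) ^ 2 * tilt t θ x ∂μ ≤ (2 / t) * (∫ x, tilt t θ x ∂μ)
      + 2 * (∫ x, (‖x‖ - m) * tilt t θ x ∂μ) ^ 2
      + 2 * M ^ 2 * ((∫ x, tilt t θ x ∂μ) - 1) ^ 2 := by
  have hK : IsCompact (Metric.closedBall (0 : EuclideanSpace ℝ (Fin n)) M) :=
    isCompact_closedBall _ _
  have hKm : ∀ᵐ x ∂μ, x ∈ Metric.closedBall (0 : EuclideanSpace ℝ (Fin n)) M := by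
    filter_upwards [hM] with x hx; simpa using hx
  have hc := tilt_continuous (n := n) t θ
  have hp := tilt_pos (n := n) t θ
  have int : ∀ {h : EuclideanSpace ℝ (Fin n) → ℝ}, Continuous h → Integrable h μ :=
    fun hh => integrable_of_compact hK hKm hh
  set Z := ∫ x, tilt t θ x ∂μ with hZ
  set N := ∫ x, (‖x‖ - m) * tilt t θ x ∂μ with hN
  set W := ∫ x, (‖x‖ - m) ^ 2 * tilt t θ x ∂μ with hW
  have hZ0 : 0 < Z := by
    rw [hZ, integral_pos_iff_support_of_nonneg (fun x => (hp x).le) (int hc)]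
    have : Function.support (tilt t θ) = Set.univ := by
      ext x; simpa using (hp x).ne'
    rw [this]; simp
  set c := m + N / Z with hcdef
  have iN : Integrable (fun x => (‖x‖ - m) * tilt t θ x) μ := int (by fun_prop)
  have iW : Integrable (fun x => (‖x‖ - m) ^ 2 * tilt t θ x) μ := int (by fun_prop)
  have iZ : Integrable (tilt t θ) μ := int hc
  have hψ1 : ∫ x, tilt t θ x * (√t * (‖x‖ - c)) ∂μ = 0 := by
    have : ∀ x, tilt t θ x * (√t * (‖x‖ - c)) =
        √t * ((‖x‖ - m) * tilt t θ x) - √t * (N / Z) * tilt t θ x := by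
      intro x; rw [hcdef]; ring
    simp_rw [this]
    rw [integral_sub (iN.const_mul _) (iZ.const_mul _), integral_const_mul, integral_const_mul,
      ← hN, ← hZ]
    field_simp
    ring
  have hψ2 : ∫ x, tilt t θ x * (√t * (‖x‖ - c)) ^ 2 ∂μ = t * (W - N ^ 2 / Z) := by
    have : ∀ x, tilt t θ x * (√t * (‖x‖ - c)) ^ 2 =
        t * ((‖x‖ - m) ^ 2 * tilt t θ x) - t * (2 * (N / Z)) * ((‖x‖ - m) * tilt t θ x)
          + t * (N / Z) ^ 2 * tilt t θ x := by
      intro x; rw [hcdef, mul_pow, Real.sq_sqrt ht.le]; ring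
    simp_rw [this]
    have iWN : Integrable (fun x => t * ((‖x‖ - m) ^ 2 * tilt t θ x)
        - t * (2 * (N / Z)) * ((‖x‖ - m) * tilt t θ x)) μ := (iW.const_mul _).sub (iN.const_mul _)
    rw [integral_add iWN (iZ.const_mul _),
      integral_sub (iW.const_mul _) (iN.const_mul _), integral_const_mul, integral_const_mul,
      integral_const_mul, ← hN, ← hZ, ← hW]
    field_simp
    ring
  have tau := tilt_tau hμ hM ht θ c
  rw [← hZ] at tau
  set A := ∫ x, tilt t θ x * Real.exp (√t * (‖x‖ - c)) ∂μ with hA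
  set B := ∫ x, tilt t θ x * Real.exp (-(√t * (‖x‖ - c))) ∂μ with hB
  have iA : Integrable (fun x => tilt t θ x * Real.exp (√t * (‖x‖ - c))) μ := int (by fun_prop)
  have iB : Integrable (fun x => tilt t θ x * Real.exp (-(√t * (‖x‖ - c)))) μ := int (by fun_prop)
  have i1 : Integrable (fun x => tilt t θ x * (√t * (‖x‖ - c))) μ := int (by fun_prop)
  have i2 : Integrable (fun x => tilt t θ x * (√t * (‖x‖ - c)) ^ 2) μ := int (by fun_prop)
  have hAZ : Z ≤ A := by
    have : Z = ∫ x, (tilt t θ x + tilt t θ x * (√t * (‖x‖ - c))) ∂μ := by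
      rw [integral_add iZ i1, hψ1, add_zero]
    rw [this]
    refine integral_mono (iZ.add i1) iA fun x => ?_
    have := Real.add_one_le_exp (√t * (‖x‖ - c))
    have := hp x
    beta_reduce
    nlinarith
  have hBZ : Z ≤ B := by
    have : Z = ∫ x, (tilt t θ x - tilt t θ x * (√t * (‖x‖ - c))) ∂μ := by
      rw [integral_sub iZ i1, hψ1, sub_zero]
    rw [this]
    refine integral_mono (iZ.sub i1) iB fun x => ?_
    have := Real.add_one_le_exp (-(√t * (‖x‖ - c)))
    have := hp x
    beta_reduce
    nlinarith
  have hAB : 2 * Z + t * (W - N ^ 2 / Z) ≤ A + B := by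
    have : 2 * Z + t * (W - N ^ 2 / Z) =
        ∫ x, (2 * tilt t θ x + tilt t θ x * (√t * (‖x‖ - c)) ^ 2) ∂μ := by
      rw [integral_add (iZ.const_mul _) i2, hψ2, integral_const_mul]
    rw [this, hA, hB, ← integral_add iA iB]
    refine integral_mono ((iZ.const_mul _).add i2) (iA.add iB) fun x => ?_
    have := exp_ge_quad (√t * (‖x‖ - c))
    have := hp x
    beta_reduce
    nlinarith
  have hfin : t * (W - N ^ 2 / Z) ≤ 2 * Z := by
    have he : Real.exp 1 ≤ 3 := by linarith [Real.exp_one_lt_d9]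
    have h1 : Z * (Z + t * (W - N ^ 2 / Z)) ≤ A * B := by nlinarith [mul_nonneg (sub_nonneg.2 hAZ) (sub_nonneg.2 hBZ)]
    have h2 : Z * (Z + t * (W - N ^ 2 / Z)) ≤ Z * (3 * Z) := by
      nlinarith [sq_nonneg Z]
    have h3 := le_of_mul_le_mul_left h2 hZ0
    linarith
  have hW1 : W ≤ 2 / t * Z + N ^ 2 / Z := by
    have : W - N ^ 2 / Z ≤ 2 * Z / t := by
      rw [le_div_iff₀ ht]; linarith
    have e : 2 * Z / t = 2 / t * Z := by ring
    linarith
  have hM0 : 0 ≤ M := hm0.trans hmM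
  have hNM : |N| ≤ M * Z := by
    rw [hN, hZ, ← integral_const_mul]
    refine (abs_integral_le_integral_abs).trans (integral_mono_ae iN.abs (iZ.const_mul _) ?_)
    filter_upwards [hM] with x hx
    simp only [abs_mul, abs_of_pos (hp x)]
    refine mul_le_mul_of_nonneg_right ?_ (hp x).le
    rw [abs_le]
    constructor <;> linarith [norm_nonneg x]
  have hN2 : N ^ 2 / Z ≤ 2 * N ^ 2 + 2 * M ^ 2 * (Z - 1) ^ 2 := by
    rw [div_le_iff₀ hZ0]
    have hsq : N ^ 2 ≤ M ^ 2 * Z ^ 2 := by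
      rw [← sq_abs N, ← mul_pow]; exact pow_le_pow_left₀ (abs_nonneg _) hNM 2
    rcases le_or_gt (1 / 2) Z with h | h
    · have : 0 ≤ 2 * M ^ 2 * (Z - 1) ^ 2 * Z := by positivity
      nlinarith [sq_nonneg N]
    · have h4 : 1 / 4 ≤ (Z - 1) ^ 2 := by nlinarith
      have h5 : Z ^ 2 ≤ 2 * (Z - 1) ^ 2 * Z := by nlinarith
      have h6 : M ^ 2 * Z ^ 2 ≤ M ^ 2 * (2 * (Z - 1) ^ 2 * Z) :=
        mul_le_mul_of_nonneg_left h5 (sq_nonneg M)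
      have : 0 ≤ 2 * N ^ 2 * Z := by positivity
      nlinarith
  linarith

end Core

section Fub
variable {n : ℕ} {μ : Measure (EuclideanSpace ℝ (Fin n))} [IsProbabilityMeasure μ]

lemma gauss_fubini {t : ℝ} {γ : Measure (EuclideanSpace ℝ (Fin n))} [IsProbabilityMeasure γ]
    (hγ : ∀ x : EuclideanSpace ℝ (Fin n), Integrable (fun θ => Real.exp ⟪θ, x⟫) γ ∧
        ∫ θ, Real.exp ⟪θ, x⟫ ∂γ = Real.exp (t * ‖x‖ ^ 2 / 2))
    {α : Type*} [TopologicalSpace α] [MeasurableSpace α] [T2Space α]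
    [OpensMeasurableSpace α] [SecondCountableTopology α]
    {ρ : Measure α} [IsFiniteMeasure ρ] {K : Set α} (hK : IsCompact K)
    (hρ : ∀ᵐ x ∂ρ, x ∈ K) {H w : α → ℝ} {L : α → EuclideanSpace ℝ (Fin n)}
    (hH : Continuous H) (hw : Continuous w) (hL : Continuous L) :
    Integrable (fun θ => ∫ a, H a * Real.exp (⟪θ, L a⟫ + w a) ∂ρ) γ ∧
    ∫ θ, ∫ a, H a * Real.exp (⟪θ, L a⟫ + w a) ∂ρ ∂γ =
      ∫ a, H a * Real.exp (t * ‖L a‖ ^ 2 / 2 + w a) ∂ρ := by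
  have hc : Continuous fun z : EuclideanSpace ℝ (Fin n) × α =>
      H z.2 * Real.exp (⟪z.1, L z.2⟫ + w z.2) := by fun_prop
  have e1 : ∀ θ a, H a * Real.exp (⟪θ, L a⟫ + w a) =
      H a * Real.exp (w a) * Real.exp ⟪θ, L a⟫ := by
    intro θ a; rw [Real.exp_add]; ring
  have hintegr : Integrable (fun z : EuclideanSpace ℝ (Fin n) × α =>
      H z.2 * Real.exp (⟪z.1, L z.2⟫ + w z.2)) (γ.prod ρ) := by
    rw [integrable_prod_iff' hc.aestronglyMeasurable]
    constructor
    · refine ae_of_all _ fun a => ?_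
      simp only [e1]
      exact (hγ _).1.const_mul _
    · have : (fun a => ∫ θ, ‖H a * Real.exp (⟪θ, L a⟫ + w a)‖ ∂γ) =
          fun a => |H a| * Real.exp (w a) * Real.exp (t * ‖L a‖ ^ 2 / 2) := by
        funext a
        rw [← (hγ (L a)).2, ← integral_const_mul]
        refine integral_congr_ae (ae_of_all _ fun θ => ?_)
        simp only [e1]
        rw [Real.norm_eq_abs, abs_mul, abs_mul, Real.abs_exp, Real.abs_exp]
      simp only
      rw [this]
      exact integrable_of_compact hK hρ (by fun_prop)
  refine ⟨hintegr.integral_prod_left, ?_⟩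
  rw [integral_integral_swap (f := fun θ a => H a * Real.exp (⟪θ, L a⟫ + w a)) hintegr]
  refine integral_congr_ae (ae_of_all _ fun a => ?_)
  simp only [e1]
  rw [integral_const_mul, (hγ _).2, Real.exp_add]
  ring

lemma gauss_one {t : ℝ} {γ : Measure (EuclideanSpace ℝ (Fin n))} [IsProbabilityMeasure γ]
    (hγ : ∀ x : EuclideanSpace ℝ (Fin n), Integrable (fun θ => Real.exp ⟪θ, x⟫) γ ∧
        ∫ θ, Real.exp ⟪θ, x⟫ ∂γ = Real.exp (t * ‖x‖ ^ 2 / 2))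
    {M : ℝ} (hM : ∀ᵐ x ∂μ, ‖x‖ ≤ M) {h : EuclideanSpace ℝ (Fin n) → ℝ} (hh : Continuous h) :
    Integrable (fun θ => ∫ x, h x * tilt t θ x ∂μ) γ ∧
    ∫ θ, ∫ x, h x * tilt t θ x ∂μ ∂γ = ∫ x, h x ∂μ := by
  have hK : IsCompact (Metric.closedBall (0 : EuclideanSpace ℝ (Fin n)) M) :=
    isCompact_closedBall _ _
  have hKm : ∀ᵐ x ∂μ, x ∈ Metric.closedBall (0 : EuclideanSpace ℝ (Fin n)) M := by
    filter_upwards [hM] with x hx; simpa using hx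
  have := gauss_fubini hγ hK hKm (H := h) (w := fun x => -(t * ‖x‖ ^ 2 / 2)) (L := fun x => x)
    hh (by fun_prop) continuous_id
  simpa [tilt, sub_eq_add_neg] using this

lemma gauss_two {t : ℝ} {γ : Measure (EuclideanSpace ℝ (Fin n))} [IsProbabilityMeasure γ]
    (hγ : ∀ x : EuclideanSpace ℝ (Fin n), Integrable (fun θ => Real.exp ⟪θ, x⟫) γ ∧
        ∫ θ, Real.exp ⟪θ, x⟫ ∂γ = Real.exp (t * ‖x‖ ^ 2 / 2))
    {M : ℝ} (hM : ∀ᵐ x ∂μ, ‖x‖ ≤ M) {h : EuclideanSpace ℝ (Fin n) → ℝ} (hh : Continuous h) :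
    Integrable (fun θ => (∫ x, h x * tilt t θ x ∂μ) ^ 2) γ ∧
    ∫ θ, (∫ x, h x * tilt t θ x ∂μ) ^ 2 ∂γ =
      ∫ z, h z.1 * h z.2 * Real.exp (t * ⟪z.1, z.2⟫) ∂(μ.prod μ) := by
  have hK : IsCompact (Metric.closedBall (0 : EuclideanSpace ℝ (Fin n)) M ×ˢ
      Metric.closedBall (0 : EuclideanSpace ℝ (Fin n)) M) :=
    (isCompact_closedBall _ _).prod (isCompact_closedBall _ _)
  have hKm : ∀ᵐ z ∂(μ.prod μ), z ∈ (Metric.closedBall (0 : EuclideanSpace ℝ (Fin n)) M ×ˢ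
      Metric.closedBall (0 : EuclideanSpace ℝ (Fin n)) M) := by
    have h1 : ∀ᵐ z ∂(μ.prod μ), ‖z.1‖ ≤ M := Measure.quasiMeasurePreserving_fst.ae hM
    have h2 : ∀ᵐ z ∂(μ.prod μ), ‖z.2‖ ≤ M := Measure.quasiMeasurePreserving_snd.ae hM
    filter_upwards [h1, h2] with z hz1 hz2
    simp [hz1, hz2]
  have := gauss_fubini hγ hK hKm (H := fun z => h z.1 * h z.2)
    (w := fun z => -(t * ‖z.1‖ ^ 2 / 2) - t * ‖z.2‖ ^ 2 / 2) (L := fun z => z.1 + z.2)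
    (by fun_prop) (by fun_prop) (by fun_prop)
  have e : ∀ θ, (∫ x, h x * tilt t θ x ∂μ) ^ 2 =
      ∫ z, h z.1 * h z.2 * Real.exp (⟪θ, z.1 + z.2⟫ + (-(t * ‖z.1‖ ^ 2 / 2) - t * ‖z.2‖ ^ 2 / 2))
        ∂(μ.prod μ) := by
    intro θ
    rw [sq, ← integral_prod_mul]
    refine integral_congr_ae (ae_of_all _ fun z => ?_)
    simp only [tilt]
    have : ⟪θ, z.1 + z.2⟫ + (-(t * ‖z.1‖ ^ 2 / 2) - t * ‖z.2‖ ^ 2 / 2) =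
        (⟪θ, z.1⟫ - t * ‖z.1‖ ^ 2 / 2) + (⟪θ, z.2⟫ - t * ‖z.2‖ ^ 2 / 2) := by
      rw [inner_add_right]; ring
    rw [this, Real.exp_add]; ring
  simp_rw [e]
  refine ⟨this.1, this.2.trans ?_⟩
  refine integral_congr_ae (ae_of_all _ fun z => ?_)
  simp only
  congr 2
  rw [norm_add_sq_real]; ring

lemma core_ineq (hμ : MidLC μ) {M : ℝ} (hM : ∀ᵐ x ∂μ, ‖x‖ ≤ M) {t : ℝ} (ht : 0 < t)
    (m : ℝ) (hm0 : 0 ≤ m) (hmM : m ≤ M) :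
    ∫ x, (‖x‖ - m) ^ 2 ∂μ ≤ 2 / t
      + 2 * ∫ z, (‖z.1‖ - m) * (‖z.2‖ - m) * Real.exp (t * ⟪z.1, z.2⟫) ∂(μ.prod μ)
      + 2 * M ^ 2 * ((∫ z, Real.exp (t * ⟪z.1, z.2⟫) ∂(μ.prod μ)) - 1) := by
  obtain ⟨γ, hγp, hγ⟩ := gauss_exists n ht
  have c1 : Continuous fun x : EuclideanSpace ℝ (Fin n) => ‖x‖ - m := by fun_prop
  have c2 : Continuous fun x : EuclideanSpace ℝ (Fin n) => (‖x‖ - m) ^ 2 := by fun_prop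
  obtain ⟨iW, eW⟩ := gauss_one (μ := μ) hγ hM c2
  obtain ⟨iZ, eZ⟩ := gauss_one (μ := μ) hγ hM (h := fun _ => 1) continuous_const
  obtain ⟨iN, eN⟩ := gauss_two (μ := μ) hγ hM c1
  obtain ⟨iZ2, eZ2⟩ := gauss_two (μ := μ) hγ hM (h := fun _ => 1) continuous_const
  simp only [one_mul, integral_const, probReal_univ, smul_eq_mul, mul_one] at iZ eZ iZ2 eZ2
  have iq : Integrable (fun θ => ((∫ x, tilt t θ x ∂μ) - 1) ^ 2) γ := by
    have : (fun θ => ((∫ x, tilt t θ x ∂μ) - 1) ^ 2) =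
        fun θ => (∫ x, tilt t θ x ∂μ) ^ 2 - 2 * (∫ x, tilt t θ x ∂μ) + 1 := by funext θ; ring
    rw [this]
    exact (iZ2.sub (iZ.const_mul 2)).add (integrable_const 1)
  have eq : ∫ θ, ((∫ x, tilt t θ x ∂μ) - 1) ^ 2 ∂γ =
      (∫ z, Real.exp (t * ⟪z.1, z.2⟫) ∂(μ.prod μ)) - 1 := by
    have : ∀ θ, ((∫ x, tilt t θ x ∂μ) - 1) ^ 2 =
        (∫ x, tilt t θ x ∂μ) ^ 2 - (2 * (∫ x, tilt t θ x ∂μ) - 1) := by intro θ; ring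
    simp_rw [this]
    have i3 : Integrable (fun θ => 2 * (∫ x, tilt t θ x ∂μ) - 1) γ :=
      (iZ.const_mul 2).sub (integrable_const 1)
    rw [integral_sub iZ2 i3, integral_sub (iZ.const_mul 2) (integrable_const 1),
      integral_const_mul, eZ, eZ2]
    simp
    norm_num
  have key := integral_mono (μ := γ) iW
    (((iZ.const_mul (2 / t)).add (iN.const_mul 2)).add (iq.const_mul (2 * M ^ 2)))
    (fun θ => tilt_var hμ hM ht θ m hm0 hmM)
  rw [eW] at key
  refine key.trans_eq ?_
  have i4 : Integrable (fun θ => 2 / t * (∫ x, tilt t θ x ∂μ)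
      + 2 * (∫ x, (‖x‖ - m) * tilt t θ x ∂μ) ^ 2) γ := (iZ.const_mul (2 / t)).add (iN.const_mul 2)
  have e5 := integral_add i4 (iq.const_mul (2 * M ^ 2))
  refine Eq.trans ?_ (e5.trans ?_)
  · rfl
  · rw [integral_add (iZ.const_mul (2 / t)) (iN.const_mul 2), integral_const_mul,
      integral_const_mul, integral_const_mul, eZ, eN, eq, mul_one]

end Fub

lemma abs_exp_sub_one_le' (s : ℝ) : |Real.exp s - 1| ≤ |s| * Real.exp |s| := by
  rcases le_total 0 s with h | h
  · have h1 : 1 - s ≤ Real.exp (-s) := by linarith [Real.add_one_le_exp (-s)]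
    have h2 : Real.exp (-s) * Real.exp s = 1 := by rw [← Real.exp_add]; simp
    have h3 := Real.exp_pos s
    have h4 : 1 ≤ Real.exp s := Real.one_le_exp h
    rw [abs_of_nonneg h, abs_of_nonneg (by linarith)]
    nlinarith
  · have h1 := Real.add_one_le_exp s
    have h4 : Real.exp s ≤ 1 := Real.exp_le_one_iff.2 h
    have h5 : 1 ≤ Real.exp (-s) := Real.one_le_exp (by linarith)
    rw [abs_of_nonpos h, abs_of_nonpos (by linarith)]
    nlinarith

lemma exp_sub_one_sq_le (s : ℝ) : (Real.exp s - 1) ^ 2 ≤ s ^ 2 * Real.exp (2 * |s|) := by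
  have h := pow_le_pow_left₀ (abs_nonneg _) (abs_exp_sub_one_le' s) 2
  rw [sq_abs, mul_pow, sq_abs, ← Real.exp_nat_mul] at h
  exact_mod_cast h

lemma exp_sub_one_le_add (s : ℝ) : Real.exp s ≤ 1 + s + s ^ 2 * Real.exp (2 * |s|) := by
  have h1 : 1 - s ≤ Real.exp (-s) := by linarith [Real.add_one_le_exp (-s)]
  have h2 : Real.exp (-s) * Real.exp s = 1 := by rw [← Real.exp_add]; simp
  have h3 := Real.exp_pos s
  have h4 : Real.exp s - 1 ≤ s * Real.exp s := by nlinarith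
  have h5 : s * (Real.exp s - 1) ≤ |s| * (|s| * Real.exp |s|) := by
    refine (le_abs_self _).trans ?_
    rw [abs_mul]
    exact mul_le_mul_of_nonneg_left (abs_exp_sub_one_le' s) (abs_nonneg s)
  have h6 : |s| * (|s| * Real.exp |s|) = s ^ 2 * Real.exp |s| := by
    rw [← sq_abs s]; ring
  have h7 : Real.exp |s| ≤ Real.exp (2 * |s|) := Real.exp_le_exp.2 (by linarith [abs_nonneg s])
  have h8 := mul_le_mul_of_nonneg_left h7 (sq_nonneg s)
  nlinarith

section Fub2
variable {n : ℕ} {μ : Measure (EuclideanSpace ℝ (Fin n))} [IsProbabilityMeasure μ]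

lemma int_prod {M : ℝ} (hM : ∀ᵐ x ∂μ, ‖x‖ ≤ M)
    {h : EuclideanSpace ℝ (Fin n) × EuclideanSpace ℝ (Fin n) → ℝ} (hh : Continuous h) :
    Integrable h (μ.prod μ) := by
  have hK : IsCompact (Metric.closedBall (0 : EuclideanSpace ℝ (Fin n)) M ×ˢ
      Metric.closedBall (0 : EuclideanSpace ℝ (Fin n)) M) :=
    (isCompact_closedBall _ _).prod (isCompact_closedBall _ _)
  refine integrable_of_compact hK ?_ hh
  have h1 : ∀ᵐ z ∂(μ.prod μ), ‖z.1‖ ≤ M := Measure.quasiMeasurePreserving_fst.ae hM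
  have h2 : ∀ᵐ z ∂(μ.prod μ), ‖z.2‖ ≤ M := Measure.quasiMeasurePreserving_snd.ae hM
  filter_upwards [h1, h2] with z hz1 hz2
  simp [hz1, hz2]

lemma int_single {M : ℝ} (hM : ∀ᵐ x ∂μ, ‖x‖ ≤ M)
    {h : EuclideanSpace ℝ (Fin n) → ℝ} (hh : Continuous h) :
    Integrable h μ := by
  refine integrable_of_compact (isCompact_closedBall (0 : EuclideanSpace ℝ (Fin n)) M) ?_ hh
  filter_upwards [hM] with x hx; simpa using hx

lemma core2 (hμ : MidLC μ) {M : ℝ} (hM0 : 0 ≤ M) (hM : ∀ᵐ x ∂μ, ‖x‖ ≤ M) {t : ℝ} (ht : 0 < t)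
    {J : ℝ} (hJ : ∫ z, (t * ⟪z.1, z.2⟫) ^ 2 * Real.exp (2 * |t * ⟪z.1, z.2⟫|) ∂(μ.prod μ) ≤ J)
    (hJ1 : J ≤ 1 / 16) {b : ℝ} (hb : ‖∫ x, x ∂μ‖ ^ 2 ≤ b) :
    ∫ x, (‖x‖ - ∫ y, ‖y‖ ∂μ) ^ 2 ∂μ ≤ 4 / t + 4 * M ^ 2 * (t * b + J) := by
  set m := ∫ y, ‖y‖ ∂μ with hm
  have iN : Integrable (fun x : EuclideanSpace ℝ (Fin n) => ‖x‖) μ := int_single hM (by fun_prop)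
  have hm0 : 0 ≤ m := integral_nonneg fun x => norm_nonneg x
  have hmM : m ≤ M := by
    have := integral_mono_ae iN (integrable_const M) hM
    simpa using this
  set V := ∫ x, (‖x‖ - m) ^ 2 ∂μ with hV
  have hV0 : 0 ≤ V := integral_nonneg fun x => sq_nonneg _
  have hb0 : 0 ≤ b := (sq_nonneg _).trans hb
  set G := fun z : EuclideanSpace ℝ (Fin n) × EuclideanSpace ℝ (Fin n) =>
    (t * ⟪z.1, z.2⟫) ^ 2 * Real.exp (2 * |t * ⟪z.1, z.2⟫|) with hG
  have iG : Integrable G (μ.prod μ) := int_prod hM (by rw [hG]; fun_prop)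
  have hJ0 : 0 ≤ J := le_trans (integral_nonneg fun z =>
    mul_nonneg (sq_nonneg _) (Real.exp_pos _).le) hJ
  have core := core_ineq hμ hM ht m hm0 hmM
  rw [← hV] at core
  -- the exponential term
  have hE : (∫ z, Real.exp (t * ⟪z.1, z.2⟫) ∂(μ.prod μ)) - 1 ≤ t * b + J := by
    have is : Integrable (fun z : EuclideanSpace ℝ (Fin n) × EuclideanSpace ℝ (Fin n) =>
      ⟪z.1, z.2⟫) (μ.prod μ) := int_prod hM (by fun_prop)
    have i1 : Integrable (fun z : EuclideanSpace ℝ (Fin n) × EuclideanSpace ℝ (Fin n) =>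
      1 + t * ⟪z.1, z.2⟫) (μ.prod μ) := int_prod hM (by fun_prop)
    have h1 := integral_mono (int_prod (μ := μ) hM
      (h := fun z => Real.exp (t * ⟪z.1, z.2⟫)) (by fun_prop)) (i1.add iG)
      (fun z => exp_sub_one_le_add (t * ⟪z.1, z.2⟫))
    have h2 := integral_add i1 iG
    have h3 : ∫ z, (1 + t * ⟪z.1, z.2⟫) ∂(μ.prod μ) = 1 + t * ‖∫ x, x ∂μ‖ ^ 2 := by
      rw [integral_add (integrable_const _) (is.const_mul _), integral_const_mul,
        integral_prod _ is]
      have iid : Integrable (fun x : EuclideanSpace ℝ (Fin n) => x) μ := by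
        refine (integrable_norm_iff ?_).1 iN
        exact aestronglyMeasurable_id
      have e1 : ∀ x : EuclideanSpace ℝ (Fin n), ∫ y, ⟪x, y⟫ ∂μ = ⟪x, ∫ y, y ∂μ⟫ :=
        fun x => integral_inner iid x
      simp_rw [e1, real_inner_comm (∫ y, y ∂μ)]
      rw [integral_inner iid, real_inner_self_eq_norm_sq]
      simp
    have h4 : ∫ z, Real.exp (t * ⟪z.1, z.2⟫) ∂(μ.prod μ) ≤ (1 + t * ‖∫ x, x ∂μ‖ ^ 2) + ∫ z, G z ∂(μ.prod μ) := by
      rw [← h3, ← h2]; exact h1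
    have h5 := mul_le_mul_of_nonneg_left hb ht.le
    linarith
  -- the covariance term
  have hC : 0 < V → ∫ z, (‖z.1‖ - m) * (‖z.2‖ - m) * Real.exp (t * ⟪z.1, z.2⟫) ∂(μ.prod μ) ≤
      V / 8 + 2 * V * J := by
    intro hVpos
    have iφ : Integrable (fun x : EuclideanSpace ℝ (Fin n) => ‖x‖ - m) μ :=
      int_single hM (by fun_prop)
    have hz : ∫ z : EuclideanSpace ℝ (Fin n) × EuclideanSpace ℝ (Fin n),
        (‖z.1‖ - m) * (‖z.2‖ - m) ∂(μ.prod μ) = 0 := by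
      rw [integral_prod_mul (fun x : EuclideanSpace ℝ (Fin n) => ‖x‖ - m)
        (fun x : EuclideanSpace ℝ (Fin n) => ‖x‖ - m), integral_sub iN (integrable_const _)]
      simp [← hm]
    have hsq : ∫ z : EuclideanSpace ℝ (Fin n) × EuclideanSpace ℝ (Fin n),
        (‖z.1‖ - m) ^ 2 * (‖z.2‖ - m) ^ 2 ∂(μ.prod μ) = V * V :=
      integral_prod_mul (fun x : EuclideanSpace ℝ (Fin n) => (‖x‖ - m) ^ 2)
        (fun x : EuclideanSpace ℝ (Fin n) => (‖x‖ - m) ^ 2)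
    have j1 : Integrable (fun z : EuclideanSpace ℝ (Fin n) × EuclideanSpace ℝ (Fin n) =>
      (‖z.1‖ - m) * (‖z.2‖ - m)) (μ.prod μ) := int_prod hM (by fun_prop)
    have j2 : Integrable (fun z : EuclideanSpace ℝ (Fin n) × EuclideanSpace ℝ (Fin n) =>
      (‖z.1‖ - m) ^ 2 * (‖z.2‖ - m) ^ 2) (μ.prod μ) := int_prod hM (by fun_prop)
    have j3 : Integrable (fun z : EuclideanSpace ℝ (Fin n) × EuclideanSpace ℝ (Fin n) =>
      (‖z.1‖ - m) * (‖z.2‖ - m) * Real.exp (t * ⟪z.1, z.2⟫)) (μ.prod μ) :=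
      int_prod hM (by fun_prop)
    have j4 : Integrable (fun z : EuclideanSpace ℝ (Fin n) × EuclideanSpace ℝ (Fin n) =>
      (‖z.1‖ - m) * (‖z.2‖ - m) + 1 / (8 * V) * ((‖z.1‖ - m) ^ 2 * (‖z.2‖ - m) ^ 2)) (μ.prod μ) :=
      j1.add (j2.const_mul _)
    have h1 : ∫ z, (‖z.1‖ - m) * (‖z.2‖ - m) * Real.exp (t * ⟪z.1, z.2⟫) ∂(μ.prod μ) ≤
        ∫ z, (((‖z.1‖ - m) * (‖z.2‖ - m) + 1 / (8 * V) * ((‖z.1‖ - m) ^ 2 * (‖z.2‖ - m) ^ 2))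
          + 2 * V * G z) ∂(μ.prod μ) := by
      refine integral_mono j3 (j4.add (iG.const_mul _)) fun z => ?_
      beta_reduce
      have hg := exp_sub_one_sq_le (t * ⟪z.1, z.2⟫)
      set a := (‖z.1‖ - m) * (‖z.2‖ - m) with ha
      set e := Real.exp (t * ⟪z.1, z.2⟫) with he
      have hg2 : (e - 1) ^ 2 ≤ G z := hg
      have h3 : (‖z.1‖ - m) ^ 2 * (‖z.2‖ - m) ^ 2 = a ^ 2 := by rw [ha]; ring
      rw [h3]
      have h4 : a * (e - 1) ≤ 1 / (8 * V) * a ^ 2 + 2 * V * (e - 1) ^ 2 := by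
        have h5 : 1 / (8 * V) * a ^ 2 + 2 * V * (e - 1) ^ 2 - a * (e - 1)
          = 2 * V * (e - 1 - a / (4 * V)) ^ 2 := by field_simp; ring
        have h6 : 0 ≤ 2 * V * (e - 1 - a / (4 * V)) ^ 2 := by positivity
        linarith
      have h7 := mul_le_mul_of_nonneg_left hg2 (by positivity : 0 ≤ 2 * V)
      linarith
    rw [integral_add j4 (iG.const_mul _), integral_add j1 (j2.const_mul _), integral_const_mul,
      integral_const_mul, hz, hsq] at h1
    have h8 : 1 / (8 * V) * (V * V) = V / 8 := by field_simp
    have h9 := mul_le_mul_of_nonneg_left hJ (by positivity : 0 ≤ 2 * V)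
    linarith
  have hE2 := mul_le_mul_of_nonneg_left hE (by positivity : 0 ≤ 2 * M ^ 2)
  rcases hV0.eq_or_lt with h0 | h0
  · rw [← h0]; positivity
  · have := hC h0
    have h1 : V * J ≤ V * (1 / 16) := mul_le_mul_of_nonneg_left hJ1 hV0
    have e : 4 / t = 2 * (2 / t) := by ring
    rw [e]
    nlinarith

lemma sq_mul_exp_le {a : ℝ} (ha : 0 ≤ a) : a ^ 2 * Real.exp (a / 24) ≤ 1152 * Real.exp (a / 12) := by
  have h := Real.quadratic_le_exp_of_nonneg (x := a / 24) (by positivity)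
  have h2 : a ^ 2 ≤ 1152 * Real.exp (a / 24) := by nlinarith
  have h3 : Real.exp (a / 12) = Real.exp (a / 24) * Real.exp (a / 24) := by
    rw [← Real.exp_add]; congr 1; ring
  rw [h3]
  nlinarith [Real.exp_pos (a / 24)]

lemma J_bound {M : ℝ} (hM : ∀ᵐ x ∂μ, ‖x‖ ≤ M) {t : ℝ} (ht : 0 < t)
    (htM : t * M ≤ 1 / 48)
    (hexp : ∀ u : EuclideanSpace ℝ (Fin n), ‖u‖ = 1 → ∫ x, Real.exp (|⟪u, x⟫| / 12) ∂μ ≤ 6) :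
    ∫ z, (t * ⟪z.1, z.2⟫) ^ 2 * Real.exp (2 * |t * ⟪z.1, z.2⟫|) ∂(μ.prod μ) ≤
      6912 * t ^ 2 * ∫ x, ‖x‖ ^ 2 ∂μ := by
  have iG : Integrable (fun z : EuclideanSpace ℝ (Fin n) × EuclideanSpace ℝ (Fin n) =>
    (t * ⟪z.1, z.2⟫) ^ 2 * Real.exp (2 * |t * ⟪z.1, z.2⟫|)) (μ.prod μ) := int_prod hM (by fun_prop)
  have i2 : Integrable (fun x : EuclideanSpace ℝ (Fin n) => ‖x‖ ^ 2) μ :=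
    int_single hM (by fun_prop)
  rw [integral_prod _ iG, ← integral_const_mul]
  refine integral_mono_ae iG.integral_prod_left (i2.const_mul _) ?_
  filter_upwards [hM] with y hy
  beta_reduce
  rcases eq_or_ne y 0 with h0 | h0
  · subst h0; simp
  have hy0 : 0 < ‖y‖ := norm_pos_iff.2 h0
  set u := ‖y‖⁻¹ • y with hu
  have hu1 : ‖u‖ = 1 := by rw [hu, norm_smul, norm_inv, norm_norm]; field_simp
  have hyu : ∀ x, ⟪y, x⟫ = ‖y‖ * ⟪u, x⟫ := by
    intro x; rw [hu, real_inner_smul_left]; field_simp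
  have hpt : ∀ x, (t * ⟪y, x⟫) ^ 2 * Real.exp (2 * |t * ⟪y, x⟫|) ≤
      1152 * t ^ 2 * ‖y‖ ^ 2 * Real.exp (|⟪u, x⟫| / 12) := by
    intro x
    rw [hyu]
    set l := ⟪u, x⟫ with hl
    have hty : t * ‖y‖ ≤ 1 / 48 := (mul_le_mul_of_nonneg_left hy ht.le).trans htM
    have e1 : 2 * |t * (‖y‖ * l)| ≤ |l| / 24 := by
      rw [← mul_assoc, abs_mul, abs_of_pos (mul_pos ht hy0)]
      nlinarith [abs_nonneg l]
    have e2 := Real.exp_le_exp.2 e1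
    have e3 := sq_mul_exp_le (abs_nonneg l)
    rw [sq_abs] at e3
    calc (t * (‖y‖ * l)) ^ 2 * Real.exp (2 * |t * (‖y‖ * l)|)
        ≤ (t * (‖y‖ * l)) ^ 2 * Real.exp (|l| / 24) := mul_le_mul_of_nonneg_left e2 (sq_nonneg _)
      _ = t ^ 2 * ‖y‖ ^ 2 * (l ^ 2 * Real.exp (|l| / 24)) := by ring
      _ ≤ t ^ 2 * ‖y‖ ^ 2 * (1152 * Real.exp (|l| / 12)) :=
          mul_le_mul_of_nonneg_left e3 (by positivity)
      _ = _ := by ring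
  have ie : Integrable (fun x => Real.exp (|⟪u, x⟫| / 12)) μ := int_single hM (by fun_prop)
  have := integral_mono (μ := μ) (int_single hM (by fun_prop)) (ie.const_mul _) hpt
  rw [integral_const_mul] at this
  refine this.trans ?_
  have h6 := mul_le_mul_of_nonneg_left (hexp u hu1) (by positivity : 0 ≤ 1152 * t ^ 2 * ‖y‖ ^ 2)
  linarith

/-- Main bound for the truncated vector. -/
lemma core3 (hn : 1 ≤ n) (hμ : MidLC μ) (hM : ∀ᵐ x ∂μ, ‖x‖ ≤ 12 * √n)
    (hexp : ∀ u : EuclideanSpace ℝ (Fin n), ‖u‖ = 1 → ∫ x, Real.exp (|⟪u, x⟫| / 12) ∂μ ≤ 6)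
    (h2 : ∫ x, ‖x‖ ^ 2 ∂μ ≤ 2 * n) (hb : ‖∫ x, x ∂μ‖ ^ 2 ≤ 1) :
    ∫ x, (‖x‖ - ∫ y, ‖y‖ ∂μ) ^ 2 ∂μ ≤ 5000 * ((n : ℝ) ^ ((1 : ℝ) / 3)) ^ 2 := by
  have hn' : (1 : ℝ) ≤ n := by exact_mod_cast hn
  set a := (n : ℝ) ^ ((1 : ℝ) / 3) with ha
  have ha1 : 1 ≤ a := Real.one_le_rpow hn' (by norm_num)
  have ha3 : a ^ 3 = n := by
    rw [ha, ← Real.rpow_natCast, ← Real.rpow_mul (by positivity)]; norm_num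
  set t : ℝ := 1 / (1000 * a ^ 2) with ht
  have ht0 : 0 < t := by positivity
  have hsq : √(n : ℝ) ≤ a ^ 2 := by
    rw [Real.sqrt_le_left (by positivity), ← ha3]
    have : 1 * a ^ 3 ≤ a * a ^ 3 := mul_le_mul_of_nonneg_right ha1 (by positivity)
    nlinarith
  have htM : t * (12 * √n) ≤ 1 / 48 := by
    rw [ht, div_mul_eq_mul_div, div_le_div_iff₀ (by positivity) (by norm_num)]
    nlinarith
  have hta : t * a ^ 2 = 1 / 1000 := by rw [ht]; field_simp
  have hJ := J_bound hM ht0 htM hexp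
  have hJ' : 6912 * t ^ 2 * ∫ x, ‖x‖ ^ 2 ∂μ ≤ 1 / 50 / a := by
    have h1 := mul_le_mul_of_nonneg_left h2 (by positivity : 0 ≤ 6912 * t ^ 2)
    have h3 : 6912 * t ^ 2 * (2 * (n : ℝ)) = 13824 / 1000000 / a := by
      rw [← ha3, ht]; field_simp
      norm_num
    rw [h3] at h1
    refine h1.trans ?_
    exact div_le_div_of_nonneg_right (by norm_num) (by linarith)
  have hJ2 : 1 / 50 / a ≤ (1 : ℝ) / 16 := by
    rw [div_le_iff₀ (by positivity)]; linarith
  have := core2 hμ (by positivity) hM ht0 (hJ.trans hJ') hJ2 hb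
  refine this.trans ?_
  have e1 : 4 / t = 4000 * a ^ 2 := by rw [ht]; field_simp; norm_num
  have e2 : (12 * √(n : ℝ)) ^ 2 = 144 * a ^ 3 := by
    rw [mul_pow, Real.sq_sqrt (by positivity), ha3]; norm_num
  rw [e1, e2]
  have e3 : 4 * (144 * a ^ 3) * (t * 1 + 1 / 50 / a) = 576 * a * (t * a ^ 2) + 576 / 50 * a ^ 2 := by
    field_simp
    norm_num
  rw [e3, hta]
  nlinarith

end Fub2

section Trunc
variable {n : ℕ} {ν : Measure (EuclideanSpace ℝ (Fin n))} [IsProbabilityMeasure ν]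

lemma second_moment
    (hcov : ∀ θ : EuclideanSpace ℝ (Fin n), Integrable (fun x => ⟪θ, x⟫ ^ 2) ν ∧
      ∫ x, ⟪θ, x⟫ ^ 2 ∂ν = ‖θ‖ ^ 2) :
    Integrable (fun x => ‖x‖ ^ 2) ν ∧ ∫ x, ‖x‖ ^ 2 ∂ν = n := by
  have e : ∀ x : EuclideanSpace ℝ (Fin n),
      ‖x‖ ^ 2 = ∑ i, ⟪EuclideanSpace.single i (1 : ℝ), x⟫ ^ 2 := by
    intro x
    rw [EuclideanSpace.real_norm_sq_eq]
    simp [EuclideanSpace.inner_single_left]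
  simp_rw [e]
  constructor
  · exact integrable_finsetSum _ fun i _ => (hcov _).1
  · rw [integral_finsetSum _ fun i _ => (hcov _).1]
    simp [(hcov _).2]

lemma lin_exp (hν : MidLC ν) {u : EuclideanSpace ℝ (Fin n)}
    (hi : Integrable (fun x => ⟪u, x⟫ ^ 2) ν) (h1 : ∫ x, ⟪u, x⟫ ^ 2 ∂ν ≤ 1) :
    ∫⁻ x, ENNReal.ofReal (Real.exp (|⟪u, x⟫| / 12)) ∂ν ≤ ENNReal.ofReal 3 := by
  have hpm : Measurable fun x : EuclideanSpace ℝ (Fin n) => |⟪u, x⟫| := by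
    have : Continuous fun x : EuclideanSpace ℝ (Fin n) => |⟪u, x⟫| := by fun_prop
    exact this.measurable
  have hp : ∀ x y : EuclideanSpace ℝ (Fin n),
      |⟪u, x⟫| ≤ 2 * |⟪u, (2:ℝ)⁻¹ • (x + y)⟫| + |⟪u, y⟫| := by
    intro x y
    rw [inner_smul_right, inner_add_right, abs_mul, abs_of_pos (by norm_num : (0:ℝ) < 2⁻¹)]
    have := abs_sub (⟪u, x⟫ + ⟪u, y⟫) ⟪u, y⟫
    rw [add_sub_cancel_right] at this
    linarith
  have hq : ν.real {x | 3 < |⟪u, x⟫|} ≤ 1 / 9 := by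
    have h2 := mul_meas_ge_le_integral_of_nonneg (μ := ν)
      (ae_of_all _ fun x => sq_nonneg (⟪u, x⟫)) hi 9
    have h3 : ν.real {x | 3 < |⟪u, x⟫|} ≤ ν.real {x | 9 ≤ ⟪u, x⟫ ^ 2} := by
      refine measureReal_mono fun x hx => ?_
      simp only [Set.mem_ofPred_eq] at hx ⊢
      rw [← sq_abs]
      nlinarith
    linarith
  have hb := borell_exp hν hpm hp (r := 3) (by norm_num) hq
  have hS : MeasurableSet {x : EuclideanSpace ℝ (Fin n) | 3 < |⟪u, x⟫|} :=
    measurableSet_lt measurable_const hpm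
  rw [← lintegral_add_compl _ hS]
  have hb1 : ∫⁻ x in {x | 3 < |⟪u, x⟫|}, ENNReal.ofReal (Real.exp (|⟪u, x⟫| / 12)) ∂ν ≤
      ENNReal.ofReal (8 / 9) := by
    rw [show (4 : ℝ) * 3 = 12 by norm_num] at hb
    refine hb.trans (ENNReal.ofReal_le_ofReal (by linarith))
  have hb2 : ∫⁻ x in {x | 3 < |⟪u, x⟫|}ᶜ, ENNReal.ofReal (Real.exp (|⟪u, x⟫| / 12)) ∂ν ≤
      ENNReal.ofReal (4 / 3) := by
    have : ∀ x ∈ {x : EuclideanSpace ℝ (Fin n) | 3 < |⟪u, x⟫|}ᶜ,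
        ENNReal.ofReal (Real.exp (|⟪u, x⟫| / 12)) ≤ ENNReal.ofReal (4 / 3) := by
      intro x hx
      simp only [Set.mem_compl_iff, Set.mem_ofPred_eq, not_lt] at hx
      refine ENNReal.ofReal_le_ofReal ?_
      have h4 : Real.exp (|⟪u, x⟫| / 12) ≤ Real.exp (1 / 4) := Real.exp_le_exp.2 (by linarith)
      have h5 := Real.add_one_le_exp (-(1 / 4 : ℝ))
      have h6 : Real.exp (1 / 4) * Real.exp (-(1 / 4)) = 1 := by rw [← Real.exp_add]; simp
      have h7 := Real.exp_pos (1 / 4)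
      nlinarith
    refine (setLIntegral_mono measurable_const this).trans ?_
    rw [setLIntegral_const]
    exact mul_le_of_le_one_right' prob_le_one
  calc _ ≤ ENNReal.ofReal (8 / 9) + ENNReal.ofReal (4 / 3) := add_le_add hb1 hb2
    _ = ENNReal.ofReal (8 / 9 + 4 / 3) := (ENNReal.ofReal_add (by norm_num) (by norm_num)).symm
    _ ≤ _ := ENNReal.ofReal_le_ofReal (by norm_num)

lemma thin_shell (hn : 1 ≤ n) (hν : MidLC ν)
    (hcent : ∀ θ : EuclideanSpace ℝ (Fin n), ∫ x, ⟪θ, x⟫ ∂ν = 0)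
    (hcov : ∀ θ : EuclideanSpace ℝ (Fin n), Integrable (fun x => ⟪θ, x⟫ ^ 2) ν ∧
      ∫ x, ⟪θ, x⟫ ^ 2 ∂ν = ‖θ‖ ^ 2) :
    ∃ m : ℝ, ∫ x, (‖x‖ - m) ^ 2 ∂ν ≤ 1400 * (5000 * ((n : ℝ) ^ ((1 : ℝ) / 3)) ^ 2) := by
  have hn' : (1 : ℝ) ≤ n := by exact_mod_cast hn
  obtain ⟨i2, e2⟩ := second_moment hcov
  set s := √(n : ℝ) with hs
  have hs2 : s ^ 2 = n := Real.sq_sqrt (by positivity)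
  have hs0 : 0 < s := Real.sqrt_pos.2 (by linarith)
  have hpm : Measurable fun x : EuclideanSpace ℝ (Fin n) => ‖x‖ := measurable_norm
  have hp : ∀ x y : EuclideanSpace ℝ (Fin n), ‖x‖ ≤ 2 * ‖(2:ℝ)⁻¹ • (x + y)‖ + ‖y‖ := by
    intro x y
    rw [norm_smul, norm_inv, Real.norm_two]
    have := norm_sub_le (x + y) y
    rw [add_sub_cancel_right] at this
    linarith
  set S := {x : EuclideanSpace ℝ (Fin n) | 4 * s < ‖x‖} with hSdef
  have hS : MeasurableSet S := measurableSet_lt measurable_const hpm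
  set q := ν.real S with hqdef
  have hq0 : 0 ≤ q := measureReal_nonneg
  have hq : q ≤ 1 / 16 := by
    have h2 := mul_meas_ge_le_integral_of_nonneg (μ := ν)
      (ae_of_all _ fun x => sq_nonneg (‖x‖)) i2 (16 * n)
    have h3 : q ≤ ν.real {x | 16 * (n : ℝ) ≤ ‖x‖ ^ 2} := by
      refine measureReal_mono fun x hx => ?_
      simp only [hSdef, Set.mem_ofPred_eq] at hx ⊢
      nlinarith
    rw [e2] at h2
    have h4 : 16 * (n : ℝ) * q ≤ n := (mul_le_mul_of_nonneg_left h3 (by positivity)).trans h2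
    nlinarith
  set B := Metric.closedBall (0 : EuclideanSpace ℝ (Fin n)) (12 * s) with hBdef
  have hB : MeasurableSet B := Metric.isClosed_closedBall.measurableSet
  set p := ν.real Bᶜ with hpdef
  have hp0 : 0 ≤ p := measureReal_nonneg
  have hBc : Bᶜ = {x : EuclideanSpace ℝ (Fin n) | 2 * (4 * s) + 4 * s < ‖x‖} := by
    ext x
    simp only [hBdef, Set.mem_compl_iff, Metric.mem_closedBall, dist_zero_right, not_le,
      Set.mem_ofPred_eq]
    constructor <;> intro h <;> linarith
  have hpq : p ≤ q / 15 := by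
    have h1 := borell_step hν hpm hp (4 * s) (4 * s)
    rw [← hBc] at h1
    have h1' : p * (1 - q) ≤ q ^ 2 := h1
    nlinarith
  have hpB : ν.real B = 1 - p := by
    have := probReal_compl_eq_one_sub (μ := ν) hB
    linarith
  have hBpos : 0 < ν.real B := by linarith
  have hBne : ν B ≠ 0 := fun h => by simp [Measure.real, h] at hBpos
  set μ := (ν B)⁻¹ • ν.restrict B with hμdef
  have hμp : IsProbabilityMeasure μ := by
    constructor
    rw [hμdef]
    simp only [Measure.smul_apply, Measure.restrict_apply MeasurableSet.univ, Set.univ_inter,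
      smul_eq_mul]
    exact ENNReal.inv_mul_cancel hBne (measure_ne_top _ _)
  have hμ : MidLC μ := hν.restrict (convex_closedBall _ _) hB _
  have hintegr : ∀ h : EuclideanSpace ℝ (Fin n) → ℝ,
      (1 - p) * ∫ x, h x ∂μ = ∫ x in B, h x ∂ν := by
    intro h
    rw [hμdef, integral_smul_measure, ENNReal.toReal_inv, smul_eq_mul, ← hpB]
    exact mul_inv_cancel_left₀ hBpos.ne' _
  have hle : ∀ h : EuclideanSpace ℝ (Fin n) → ℝ, (∀ x, 0 ≤ h x) → Integrable h ν →
      ∫ x, h x ∂μ ≤ 2 * ∫ x, h x ∂ν := by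
    intro h h0 hi
    have h1 : ∫ x in B, h x ∂ν ≤ ∫ x, h x ∂ν :=
      setIntegral_le_integral hi (ae_of_all _ h0)
    have h2 := hintegr h
    have h3 : 0 ≤ ∫ x, h x ∂μ := integral_nonneg h0
    nlinarith
  have hMae : ∀ᵐ x ∂μ, ‖x‖ ≤ 12 * s := by
    refine Measure.ae_smul_measure ?_ _
    filter_upwards [ae_restrict_mem hB] with x hx
    simpa [hBdef] using hx
  -- hypotheses for `core3`
  have hexp : ∀ u : EuclideanSpace ℝ (Fin n), ‖u‖ = 1 →
      ∫ x, Real.exp (|⟪u, x⟫| / 12) ∂μ ≤ 6 := by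
    intro u hu
    have h1 := lin_exp hν (hcov u).1 (by rw [(hcov u).2, hu]; norm_num)
    have hc : Continuous fun x : EuclideanSpace ℝ (Fin n) => Real.exp (|⟪u, x⟫| / 12) := by
      fun_prop
    have hi : Integrable (fun x => Real.exp (|⟪u, x⟫| / 12)) ν := by
      refine ⟨hc.aestronglyMeasurable, ?_⟩
      rw [hasFiniteIntegral_iff_ofReal (ae_of_all _ fun x => (Real.exp_pos _).le)]
      exact h1.trans_lt ENNReal.ofReal_lt_top
    have h2 := hle _ (fun x => (Real.exp_pos _).le) hi
    rw [← ofReal_integral_eq_lintegral_ofReal hi (ae_of_all _ fun x => (Real.exp_pos _).le),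
      ENNReal.ofReal_le_ofReal_iff (by norm_num)] at h1
    linarith
  have h2 : ∫ x, ‖x‖ ^ 2 ∂μ ≤ 2 * n := by
    have := hle _ (fun x => sq_nonneg ‖x‖) i2
    rwa [e2] at this
  have hb : ‖∫ x, x ∂μ‖ ^ 2 ≤ 1 := by
    set b := ∫ x, x ∂μ with hbdef
    have iN : Integrable (fun x : EuclideanSpace ℝ (Fin n) => ‖x‖) μ :=
      int_single hMae (by fun_prop)
    have iid : Integrable (fun x : EuclideanSpace ℝ (Fin n) => x) μ :=
      (integrable_norm_iff aestronglyMeasurable_id).1 iN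
    have h3 : ∫ x, ⟪b, x⟫ ∂μ = ‖b‖ ^ 2 := by
      rw [integral_inner iid, ← hbdef, real_inner_self_eq_norm_sq]
    have h4 := hintegr fun x => ⟪b, x⟫
    rw [h3] at h4
    have hmeas : AEStronglyMeasurable (fun x : EuclideanSpace ℝ (Fin n) => ⟪b, x⟫) ν :=
      Continuous.aestronglyMeasurable (by fun_prop)
    have i1 : Integrable (fun x => ⟪b, x⟫) ν := by
      refine Integrable.mono' ((hcov b).1.add (integrable_const 1)) hmeas (ae_of_all _ fun x => ?_)
      simp only [Pi.add_apply, Real.norm_eq_abs]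
      rw [← sq_abs]
      nlinarith [sq_nonneg (|⟪b, x⟫| - 1)]
    have h5 := integral_add_compl hB i1
    rw [hcent] at h5
    have h6 : ∫ x in Bᶜ, -⟪b, x⟫ ∂ν ≤ ∫ x in Bᶜ, (⟪b, x⟫ ^ 2 / 4 + 1) ∂ν := by
      refine integral_mono i1.neg.integrableOn
        (((hcov b).1.div_const 4).add (integrable_const 1)).integrableOn fun x => ?_
      beta_reduce
      nlinarith [sq_nonneg (⟪b, x⟫ / 2 + 1)]
    rw [integral_neg, integral_add ((hcov b).1.div_const 4).integrableOn
      (integrable_const (1:ℝ)).integrableOn] at h6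
    have h7 : ∫ x in Bᶜ, ⟪b, x⟫ ^ 2 / 4 ∂ν ≤ ‖b‖ ^ 2 / 4 := by
      rw [← (hcov b).2, ← integral_div]
      exact setIntegral_le_integral ((hcov b).1.div_const 4)
        (ae_of_all _ fun x => by positivity)
    have h8 : ∫ x in Bᶜ, (1 : ℝ) ∂ν = p := by
      rw [setIntegral_const]; simp [hpdef]
    rw [h8] at h6
    nlinarith [sq_nonneg ‖b‖]
  have hV := core3 hn hμ hMae hexp h2 hb
  set m := ∫ y, ‖y‖ ∂μ with hm
  set V := ∫ x, (‖x‖ - m) ^ 2 ∂μ with hVdef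
  have hV0 : 0 ≤ V := integral_nonneg fun x => sq_nonneg _
  have hm0 : 0 ≤ m := integral_nonneg fun x => norm_nonneg x
  have hm2 : m ≤ 2 * s := by
    have iN : Integrable (fun x : EuclideanSpace ℝ (Fin n) => ‖x‖) μ :=
      int_single hMae (by fun_prop)
    have iN2 : Integrable (fun x : EuclideanSpace ℝ (Fin n) => ‖x‖ ^ 2) μ :=
      int_single hMae (by fun_prop)
    have h1 : ∫ x, (2 * s) * ‖x‖ ∂μ ≤ ∫ x, (‖x‖ ^ 2 + s ^ 2) ∂μ := by
      refine integral_mono (iN.const_mul _) (iN2.add (integrable_const _)) fun x => ?_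
      beta_reduce
      nlinarith [sq_nonneg (‖x‖ - s)]
    rw [integral_const_mul, integral_add iN2 (integrable_const _)] at h1
    simp only [integral_const, probReal_univ, smul_eq_mul, one_mul] at h1
    nlinarith
  -- integrability of the square deviations
  have iD : Integrable (fun x : EuclideanSpace ℝ (Fin n) => (‖x‖ - m) ^ 2) ν := by
    refine Integrable.mono' ((i2.const_mul 2).add (integrable_const (2 * m ^ 2)))
      (Continuous.aestronglyMeasurable (by fun_prop)) (ae_of_all _ fun x => ?_)
    simp only [Pi.add_apply, Real.norm_eq_abs, abs_pow, sq_abs]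
    nlinarith [sq_nonneg (‖x‖ + m)]
  have hBV : ∫ x in B, (‖x‖ - m) ^ 2 ∂ν ≤ V := by
    rw [← hintegr, ← hVdef]; nlinarith
  have hqV : n * q ≤ V / 3 := by
    have h1 : ∫ x in B ∩ S, (4 * (n : ℝ)) ∂ν ≤ ∫ x in B ∩ S, (‖x‖ - m) ^ 2 ∂ν := by
      refine setIntegral_mono_on (integrable_const _).integrableOn iD.integrableOn
        (hB.inter hS) fun x hx => ?_
      have : 4 * s < ‖x‖ := hx.2
      nlinarith
    have h3 : ∫ x in B ∩ S, (‖x‖ - m) ^ 2 ∂ν ≤ ∫ x in B, (‖x‖ - m) ^ 2 ∂ν :=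
      setIntegral_mono_set iD.integrableOn (ae_of_all _ fun x => sq_nonneg _)
        (Filter.Eventually.of_forall Set.inter_subset_left)
    rw [setIntegral_const, smul_eq_mul] at h1
    have h4 : q ≤ ν.real (B ∩ S) + p := by
      refine le_trans (measureReal_mono (s₂ := (B ∩ S) ∪ Bᶜ) fun x hx => ?_)
        (measureReal_union_le _ _)
      by_cases hxB : x ∈ B
      · exact Or.inl ⟨hxB, hx⟩
      · exact Or.inr hxB
    have h5 : q * (14 / 15) ≤ ν.real (B ∩ S) := by linarith
    have h6 := mul_le_mul_of_nonneg_right h5 (by positivity : 0 ≤ 4 * (n : ℝ))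
    nlinarith
  have hScV : ∫ x in Sᶜ, (‖x‖ - m) ^ 2 ∂ν ≤ V := by
    refine le_trans (setIntegral_mono_set iD.integrableOn (ae_of_all _ fun x => sq_nonneg _)
        (Filter.Eventually.of_forall fun x hx => ?_)) hBV
    have hx' : ¬ (4 * s < ‖x‖) := hx
    have : ‖x‖ ≤ 12 * s := by linarith
    show x ∈ B
    simpa [hBdef] using this
  have hSV : ∫ x in S, (‖x‖ - m) ^ 2 ∂ν ≤ 4096 * (n * q) := by
    have hbe := borell_exp hν hpm hp (r := 4 * s) (by positivity) (by linarith [hq] : q ≤ 1 / 9)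
    have h1 : ∀ x ∈ S, (‖x‖ - m) ^ 2 ≤ 512 * n * Real.exp (‖x‖ / (4 * (4 * s))) := by
      intro x hx
      have hx' : 4 * s < ‖x‖ := hx
      have h3 : (‖x‖ - m) ^ 2 ≤ ‖x‖ ^ 2 := by nlinarith
      have h4 := Real.quadratic_le_exp_of_nonneg (x := ‖x‖ / (4 * (4 * s))) (by positivity)
      set v := ‖x‖ / (4 * (4 * s)) with hv
      have hv0 : 0 ≤ v := by positivity
      have h5 : ‖x‖ ^ 2 = 256 * n * v ^ 2 := by
        rw [hv, ← hs2]; field_simp; norm_num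
      have h6 : v ^ 2 ≤ 2 * Real.exp v := by linarith
      have h7 := mul_le_mul_of_nonneg_left h6 (by positivity : 0 ≤ 256 * (n : ℝ))
      linarith
    have h2 : ∫⁻ x in S, ENNReal.ofReal ((‖x‖ - m) ^ 2) ∂ν ≤ ENNReal.ofReal (4096 * (n * q)) := by
      calc ∫⁻ x in S, ENNReal.ofReal ((‖x‖ - m) ^ 2) ∂ν
          ≤ ∫⁻ x in S, ENNReal.ofReal (512 * n) *
              ENNReal.ofReal (Real.exp (‖x‖ / (4 * (4 * s)))) ∂ν := by
            refine setLIntegral_mono' hS fun x hx => ?_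
            rw [← ENNReal.ofReal_mul (by positivity)]
            exact ENNReal.ofReal_le_ofReal (h1 x hx)
        _ = ENNReal.ofReal (512 * n) *
              ∫⁻ x in S, ENNReal.ofReal (Real.exp (‖x‖ / (4 * (4 * s)))) ∂ν :=
            lintegral_const_mul' _ _ ENNReal.ofReal_ne_top
        _ ≤ ENNReal.ofReal (512 * n) * ENNReal.ofReal (8 * q) := by gcongr
        _ = ENNReal.ofReal (512 * n * (8 * q)) := (ENNReal.ofReal_mul (by positivity)).symm
        _ = _ := by congr 1; ring
    rw [← ofReal_integral_eq_lintegral_ofReal iD.integrableOn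
      (ae_of_all _ fun x => sq_nonneg _), ENNReal.ofReal_le_ofReal_iff (by positivity)] at h2
    exact h2
  refine ⟨m, ?_⟩
  rw [← integral_add_compl hS iD]
  linarith

end Trunc
/-- thin-shell width bound `√Var|X| ≤ C n^{1/3}`. -/
theorem statement5 :
    ∃ C : ℝ, 0 < C ∧
      ∀ (n : ℕ) (Ω : Type) (_mΩ : MeasurableSpace Ω) (P : Measure Ω),
        IsProbabilityMeasure P →
        ∀ (X : Ω → EuclideanSpace ℝ (Fin n)) (f : EuclideanSpace ℝ (Fin n) → ℝ),
          HasDensityFn P X f → IsLogConcaveFn f → Isotropic P X →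
          Real.sqrt (variance (fun ω => ‖X ω‖) P) ≤ C * (n : ℝ) ^ ((1:ℝ)/3) := by
  refine ⟨3000, by norm_num, ?_⟩
  intro n Ω _mΩ P hP X f hd hf hiso
  obtain ⟨hX, hmap⟩ := hd
  obtain ⟨hc, hv⟩ := hiso
  rcases Nat.eq_zero_or_pos n with h0 | hn
  · subst h0
    have : (fun ω => ‖X ω‖) = fun _ => (0 : ℝ) := by
      funext ω; rw [Subsingleton.elim (X ω) 0, norm_zero]
    rw [this]
    have h2 : variance (fun _ : Ω => (0 : ℝ)) P = 0 := variance_zero P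
    rw [h2, Real.sqrt_zero]
    positivity
  have hν : MidLC (Measure.map X P) := by rw [hmap]; exact midLC_of_logConcave hf
  have hνp : IsProbabilityMeasure (Measure.map X P) :=
    Measure.isProbabilityMeasure_map hX.aemeasurable
  have hcov : ∀ θ : EuclideanSpace ℝ (Fin n),
      Integrable (fun x => ⟪θ, x⟫ ^ 2) (Measure.map X P) ∧
      ∫ x, ⟪θ, x⟫ ^ 2 ∂(Measure.map X P) = ‖θ‖ ^ 2 := by
    intro θ
    have hm : AEStronglyMeasurable (fun x : EuclideanSpace ℝ (Fin n) => ⟪θ, x⟫ ^ 2)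
      (Measure.map X P) := Continuous.aestronglyMeasurable (by fun_prop)
    have e : ∫ x, ⟪θ, x⟫ ^ 2 ∂(Measure.map X P) = ‖θ‖ ^ 2 := by
      rw [integral_map hX.aemeasurable hm, ← real_inner_self_eq_norm_sq, ← hv θ θ]
      refine integral_congr_ae (ae_of_all _ fun ω => ?_)
      simp only [real_inner_comm θ]
      ring
    refine ⟨?_, e⟩
    rcases eq_or_ne θ 0 with h | h
    · subst h; simp
    · by_contra hcon
      rw [integral_undef hcon] at e
      have := norm_pos_iff.2 h
      have : 0 < ‖θ‖ ^ 2 := by positivity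
      linarith
  have i2 := (second_moment hcov).1
  have iN : Integrable (fun x : EuclideanSpace ℝ (Fin n) => ‖x‖) (Measure.map X P) := by
    refine Integrable.mono' (i2.add (integrable_const 1))
      (Continuous.aestronglyMeasurable (by fun_prop)) (ae_of_all _ fun x => ?_)
    simp only [Pi.add_apply, norm_norm]
    nlinarith [sq_nonneg (‖x‖ - 1)]
  have iid : Integrable (fun x : EuclideanSpace ℝ (Fin n) => x) (Measure.map X P) :=
    (integrable_norm_iff aestronglyMeasurable_id).1 iN
  have hcent : ∀ θ : EuclideanSpace ℝ (Fin n), ∫ x, ⟪θ, x⟫ ∂(Measure.map X P) = 0 := by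
    intro θ
    rw [integral_inner iid, integral_map (f := fun x => x) hX.aemeasurable
      aestronglyMeasurable_id, hc,
      inner_zero_right]
  obtain ⟨m, hm⟩ := thin_shell hn hν hcent hcov
  rw [integral_map hX.aemeasurable (Continuous.aestronglyMeasurable (by fun_prop))] at hm
  have hXn : AEStronglyMeasurable (fun ω => ‖X ω‖) P := hX.norm.aestronglyMeasurable
  have hvar : variance (fun ω => ‖X ω‖) P ≤ ∫ ω, (‖X ω‖ - m) ^ 2 ∂P := by
    rw [← variance_sub_const hXn m]
    exact variance_le_expectation_sq (hXn.sub aestronglyMeasurable_const)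
  set a := (n : ℝ) ^ ((1 : ℝ) / 3) with ha
  have ha0 : 0 ≤ a := by positivity
  rw [Real.sqrt_le_left (by positivity)]
  nlinarith [sq_nonneg a]
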